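/- Let n > 4 and let H(n) be the Hamiltonian Lie superalgebra over ℂ. Then every super-biderivation of H(n) is an inner super-biderivation; that is, for every homogeneous super-biderivation f of H(n) there exists λ ∈ ℂ such that f(x,y) = λ[x,y] for all x, y ∈ H(n) (equivalently BDer(H(n)) = IBDer(H(n))). -/

import Mathlib

open scoped BigOperators

noncomputable section

namespace CartanSuper

/-- Coordinates of the exterior algebra `Λ(n)` with respect to the monomial basis
`{x_S : S ⊆ {1,…,n}}`. -/
abbrev Lambda (n : ℕ) := Finset (Fin n) → ℂ

/-- Endomorphism algebra of `Λ(n)`. -/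
abbrev E (n : ℕ) := Module.End ℂ (Lambda n)

variable (n : ℕ)

/-- `(−1)^k`. -/
def msign (k : ℕ) : ℂ := (-1 : ℂ) ^ k

/-- The basis monomial `x_S = x_{i₁}⋯x_{i_k}` (indices in increasing order). -/
def mono (S : Finset (Fin n)) : Lambda n := fun T => if T = S then 1 else 0

/-- Number of inversions between `S` and `T`. -/
def inversions (S T : Finset (Fin n)) : ℕ := ((S ×ˢ T).filter fun p => p.2 < p.1).card

/-- The multiplication of `Λ(n)` in coordinates:
`x_S · x_T = (−1)^{inversions} x_{S ∪ T}` for disjoint `S, T` and `0` otherwise. -/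
def lmulFun (f g : Lambda n) : Lambda n :=
  fun U => ∑ S ∈ U.powerset, msign (inversions n S (U \ S)) * f S * g (U \ S)

/-- Left multiplication by an element of `Λ(n)`, as a linear map `Λ(n) →ₗ End Λ(n)`. -/
def mulOp : Lambda n →ₗ[ℂ] E n where
  toFun f :=
    { toFun := lmulFun n f
      map_add' := by
        intro g h; funext U
        simp [lmulFun, mul_add, Finset.sum_add_distrib]
      map_smul' := by
        intro c g; funext U
        simp only [lmulFun, Pi.smul_apply, smul_eq_mul, RingHom.id_apply, Finset.mul_sum]
        exact Finset.sum_congr rfl (by intros; ring) }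
  map_add' := by
    intro f g; apply LinearMap.ext; intro h; funext U
    show lmulFun n (f + g) h U = lmulFun n f h U + lmulFun n g h U
    simp only [lmulFun]
    rw [← Finset.sum_add_distrib]
    exact Finset.sum_congr rfl (by intros; simp [Pi.add_apply]; ring)
  map_smul' := by
    intro c f; apply LinearMap.ext; intro h; funext U
    show lmulFun n (c • f) h U = (c • lmulFun n f h) U
    simp only [lmulFun, Pi.smul_apply, smul_eq_mul, Finset.mul_sum]
    exact Finset.sum_congr rfl (by intros; ring)

/-- The superderivation `∂_i` of `Λ(n)`, in coordinates. -/
def pd (i : Fin n) : E n where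
  toFun f := fun S =>
    if i ∈ S then 0 else msign (S.filter (· < i)).card * f (insert i S)
  map_add' := by
    intro f g; funext S; by_cases h : i ∈ S <;> simp [h, mul_add]
  map_smul' := by
    intro c f; funext S; by_cases h : i ∈ S <;> simp [h] <;> ring

/-- The parity operator `σ` of `Λ(n)`: `σ(x_S) = (−1)^{|S|} x_S`. -/
def par : E n where
  toFun f := fun S => msign S.card * f S
  map_add' := by intro f g; funext S; simp [mul_add]
  map_smul' := by intro c f; funext S; simp; ring

/-- The super-commutator `[D,F] = D∘F − (−1)^{|D||F|} F∘D`, extended bilinearly to all of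
`End Λ(n)` using the parity operator `σ`
(for homogeneous `D`, `σ∘D∘σ = (−1)^{|D|} D`). -/
def sbFun (D F : E n) : E n :=
  D * F - (2:ℂ)⁻¹ • ((F + par n * F * par n) * D + (F - par n * F * par n) * (par n * D * par n))

/-- The super-commutator as a bilinear map. -/
def sbL : E n →ₗ[ℂ] E n →ₗ[ℂ] E n :=
  LinearMap.mk₂ ℂ (sbFun n)
    (fun D D' F => by
      simp only [sbFun, add_mul, sub_mul, mul_add, mul_sub, smul_mul_assoc, mul_smul_comm,
        smul_add, smul_sub]
      module)
    (fun c D F => by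
      simp only [sbFun, add_mul, sub_mul, mul_add, mul_sub, smul_mul_assoc, mul_smul_comm,
        smul_add, smul_sub]
      module)
    (fun D F F' => by
      simp only [sbFun, add_mul, sub_mul, mul_add, mul_sub, smul_mul_assoc, mul_smul_comm,
        smul_add, smul_sub]
      module)
    (fun c D F => by
      simp only [sbFun, add_mul, sub_mul, mul_add, mul_sub, smul_mul_assoc, mul_smul_comm,
        smul_add, smul_sub]
      module)

/-- Shorthand for the super-commutator. -/
def sb (D F : E n) : E n := sbL n D F

/-- The ℤ₂-homogeneous component of `Λ(n)` of parity `p`. -/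
def lpar (p : ZMod 2) : Submodule ℂ (Lambda n) where
  carrier := {f | ∀ S : Finset (Fin n), (S.card : ZMod 2) ≠ p → f S = 0}
  add_mem' := by intro f g hf hg S hS; simp [Pi.add_apply, hf S hS, hg S hS]
  zero_mem' := by intro S hS; rfl
  smul_mem' := by intro c f hf S hS; simp [Pi.smul_apply, hf S hS]

/-- The ℤ-homogeneous component of `Λ(n)` of degree `m` (zero unless `0 ≤ m ≤ n`). -/
def ldeg (m : ℤ) : Submodule ℂ (Lambda n) where
  carrier := {f | ∀ S : Finset (Fin n), (S.card : ℤ) ≠ m → f S = 0}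
  add_mem' := by intro f g hf hg S hS; simp [Pi.add_apply, hf S hS, hg S hS]
  zero_mem' := by intro S hS; rfl
  smul_mem' := by intro c f hf S hS; simp [Pi.smul_apply, hf S hS]

/-- Endomorphisms of `Λ(n)` that are ℤ₂-homogeneous of parity `p`. -/
def epar (p : ZMod 2) : Submodule ℂ (E n) where
  carrier := {D | ∀ (q : ZMod 2), ∀ f ∈ lpar n q, D f ∈ lpar n (q + p)}
  add_mem' := by
    intro D F hD hF q f hf
    simpa [LinearMap.add_apply] using (lpar n (q + p)).add_mem (hD q f hf) (hF q f hf)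
  zero_mem' := by intro q f hf; simpa using (lpar n (q + p)).zero_mem
  smul_mem' := by
    intro c D hD q f hf
    simpa [LinearMap.smul_apply] using (lpar n (q + p)).smul_mem c (hD q f hf)

/-- Endomorphisms of `Λ(n)` that are ℤ-homogeneous of degree `d`. -/
def edeg (d : ℤ) : Submodule ℂ (E n) where
  carrier := {D | ∀ (m : ℤ), ∀ f ∈ ldeg n m, D f ∈ ldeg n (m + d)}
  add_mem' := by
    intro D F hD hF m f hf
    simpa [LinearMap.add_apply] using (ldeg n (m + d)).add_mem (hD m f hf) (hF m f hf)
  zero_mem' := by intro m f hf; simpa using (ldeg n (m + d)).zero_mem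
  smul_mem' := by
    intro c D hD m f hf
    simpa [LinearMap.smul_apply] using (ldeg n (m + d)).smul_mem c (hD m f hf)

/-- The linear map `(f₁,…,f_n) ↦ ∑ᵢ fᵢ ∂ᵢ`. -/
def Wmap : (Fin n → Lambda n) →ₗ[ℂ] E n where
  toFun F := ∑ i, mulOp n (F i) * pd n i
  map_add' := by
    intro F G
    simp only [Pi.add_apply, map_add, add_mul, Finset.sum_add_distrib]
  map_smul' := by
    intro c F
    simp only [RingHom.id_apply, Pi.smul_apply, map_smul, smul_mul_assoc, Finset.smul_sum]

/-- The divergence `(f₁,…,f_n) ↦ ∑ᵢ ∂ᵢ(fᵢ)`. -/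
def divMap : (Fin n → Lambda n) →ₗ[ℂ] Lambda n where
  toFun F := ∑ i, pd n i (F i)
  map_add' := by
    intro F G
    simp only [Pi.add_apply, map_add, Finset.sum_add_distrib]
  map_smul' := by
    intro c F
    simp only [RingHom.id_apply, Pi.smul_apply, map_smul, Finset.smul_sum]

/-- The Witt type Lie superalgebra `W(n) = {∑ fᵢ∂ᵢ : fᵢ ∈ Λ(n)}`. -/
def Wn : Submodule ℂ (E n) := LinearMap.range (Wmap n)

/-- Divergence-free coefficient tuples. -/
def divFree : Submodule ℂ (Fin n → Lambda n) := LinearMap.ker (divMap n)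

/-- The special type Lie superalgebra `S(n) = {∑ fᵢ∂ᵢ : ∑ ∂ᵢ(fᵢ) = 0}`. -/
def Sn : Submodule ℂ (E n) := (divFree n).map (Wmap n)

/-- The top monomial `ω = x₁x₂⋯x_n`. -/
def omegaTop : Lambda n := mono n Finset.univ

/-- `1 − x₁x₂⋯x_n`. -/
def oneM : Lambda n := mono n ∅ - omegaTop n

/-- Multiplication of every coefficient by `1 − x₁⋯x_n`. -/
def oneMScale : (Fin n → Lambda n) →ₗ[ℂ] (Fin n → Lambda n) :=
  LinearMap.pi fun i => (mulOp n (oneM n)) ∘ₗ LinearMap.proj i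

/-- The Lie superalgebra `S̃(n) = {(1−x₁⋯x_n)∑ fᵢ∂ᵢ : ∑ ∂ᵢ(fᵢ) = 0}` (`n` even). -/
def Stn : Submodule ℂ (E n) := (divFree n).map (Wmap n ∘ₗ oneMScale n)

/-- The conjugate index `i'`. -/
def cidx (i : Fin n) : Fin n :=
  ⟨if i.val < n / 2 then i.val + n / 2 else if i.val < 2 * (n / 2) then i.val - n / 2 else i.val,
   by have := i.isLt; split_ifs <;> omega⟩

/-- The linear map `f ↦ D_H(f) = (−1)^{|f|} ∑ᵢ ∂ᵢ(f)∂_{i'}` (the sign is implemented by the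
parity operator `σ`, so that this is a single linear map agreeing with `D_H` on homogeneous
elements). -/
def DHmap : Lambda n →ₗ[ℂ] E n where
  toFun f := ∑ i, mulOp n (pd n i (par n f)) * pd n (cidx n i)
  map_add' := by
    intro f g
    simp only [map_add, add_mul, Finset.sum_add_distrib]
  map_smul' := by
    intro c f
    simp only [RingHom.id_apply, map_smul, smul_mul_assoc, Finset.smul_sum]

/-- Evaluation of the top coefficient. -/
def evalTop : Lambda n →ₗ[ℂ] ℂ := LinearMap.proj Finset.univ

/-- The Hamiltonian Lie superalgebra `H(n) = {D_H(f) : f ∈ ⊕_{i=0}^{n−1} Λ(n)_i}`. -/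
def Hn : Submodule ℂ (E n) := (LinearMap.ker (evalTop n)).map (DHmap n)

/-- `H̃(n) = {D_H(f) : f ∈ Λ(n)}`. -/
def HtN : Submodule ℂ (E n) := LinearMap.range (DHmap n)

/-- The degree derivation `𝒞 = ∑ᵢ xᵢ∂ᵢ`. -/
def CC : E n := ∑ i, mulOp n (mono n {i}) * pd n i

/-- The span of the diagonal elements `xᵢ∂ᵢ`. -/
def diagSpan : Submodule ℂ (E n) :=
  Submodule.span ℂ (Set.range fun i : Fin n => mulOp n (mono n {i}) * pd n i)

/-- The four families of Cartan type Lie superalgebras. -/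
inductive CT | W | S | St | H
deriving DecidableEq

/-- Validity of the parameter `n` for each family. -/
def CT.valid : CT → ℕ → Prop
  | .W, n => 4 ≤ n
  | .S, n => 4 ≤ n
  | .St, n => 4 ≤ n ∧ Even n
  | .H, n => 4 < n

/-- The Cartan type Lie superalgebra `L` itself. -/
def CT.algebra : CT → (n : ℕ) → Submodule ℂ (E n)
  | .W, n => Wn n
  | .S, n => Sn n
  | .St, n => Stn n
  | .H, n => Hn n

/-- The extended algebra `L'`: `L' = L` for `W(n)` and `S̃(n)`, `L' = S(n) ⊕ ℂ𝒞` for `S(n)`,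
and `L' = H̃(n) ⊕ ℂ𝒞` for `H(n)`. -/
def CT.prime : CT → (n : ℕ) → Submodule ℂ (E n)
  | .W, n => Wn n
  | .S, n => Sn n ⊔ Submodule.span ℂ {CC n}
  | .St, n => Stn n
  | .H, n => HtN n ⊔ Submodule.span ℂ {CC n}

/-- The top degree `ξ_L` of the ℤ-grading. -/
def CT.xi : CT → (n : ℕ) → ℤ
  | .W, n => (n : ℤ) - 1
  | .S, n => (n : ℤ) - 2
  | .St, n => (n : ℤ) - 2
  | .H, n => (n : ℤ) - 3

/-- The ℤ-grading component `L_j = L ∩ W(n)_j`; for `S̃(n)` the component of degree `−1`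
is `span{(1−x₁⋯x_n)∂ᵢ}` instead. -/
def CT.grade (t : CT) (n : ℕ) (j : ℤ) : Submodule ℂ (E n) :=
  match t with
  | .St =>
      if j = -1 then
        Submodule.span ℂ (Set.range fun i : Fin n => mulOp n (oneM n) * pd n i)
      else Stn n ⊓ edeg n j
  | t => t.algebra n ⊓ edeg n j

/-- The ℤ-grading component `L'_j` of the extended algebra `L'`. -/
def CT.grade' (t : CT) (n : ℕ) (j : ℤ) : Submodule ℂ (E n) :=
  match t with
  | .St => CT.grade .St n j
  | t => t.prime n ⊓ edeg n j

/-- The standard Cartan subalgebra `H_L` of `L`: the part of the diagonal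
`span{xᵢ∂ᵢ}` lying in `L`. -/
def CT.cartan (t : CT) (n : ℕ) : Submodule ℂ (E n) := t.algebra n ⊓ diagSpan n

/-- The weight space of `M ⊆ End Λ(n)` of weight `μ ∈ H_L^*` under the adjoint action
of the standard Cartan subalgebra of `L`. -/
def wtsp (t : CT) (n : ℕ) (M : Submodule ℂ (E n)) (μ : Module.Dual ℂ (t.cartan n)) :
    Submodule ℂ (E n) where
  carrier := {x | x ∈ M ∧ ∀ h : t.cartan n, sbL n h x = μ h • x}
  add_mem' := by
    rintro x y ⟨hx, hx'⟩ ⟨hy, hy'⟩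
    exact ⟨M.add_mem hx hy, fun h => by simp [map_add, hx' h, hy' h, smul_add]⟩
  zero_mem' := ⟨M.zero_mem, fun h => by simp⟩
  smul_mem' := by
    rintro c x ⟨hx, hx'⟩
    exact ⟨M.smul_mem c hx, fun h => by simp [map_smul, hx' h, smul_comm c]⟩

/-- The set of roots of `M` with respect to the standard Cartan subalgebra of `L`:
the nonzero weights with nonzero weight space. -/
def CT.roots (t : CT) (n : ℕ) (M : Submodule ℂ (E n)) : Set (Module.Dual ℂ (t.cartan n)) :=
  {ε | ε ≠ 0 ∧ wtsp t n M ε ≠ ⊥}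

/-- The sign `(−1)^p` for `p ∈ ℤ₂`. -/
def sgn (p : ZMod 2) : ℂ := (-1 : ℂ) ^ p.val

/-- `f` is a super-biderivation of `L` of ℤ₂-degree `pf`:
a bilinear map with `f(L_α, L_β) ⊆ L_{α+β+pf}` satisfying
`f([x,y],z) = (−1)^{|x||f|}[x,f(y,z)] + (−1)^{|y||z|}[f(x,z),y]` and
`f(x,[y,z]) = [f(x,y),z] + (−1)^{(|f|+|x|)|y|}[y,f(x,z)]` for homogeneous `x,y,z ∈ L`.
(The bilinear map is given as a bilinear map on the ambient space `End Λ(n)`;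
only its restriction to `L` is relevant.) -/
structure IsSuperBider (L : Submodule ℂ (E n)) (pf : ZMod 2)
    (f : E n →ₗ[ℂ] E n →ₗ[ℂ] E n) : Prop where
  maps : ∀ (α β : ZMod 2), ∀ x ∈ L ⊓ epar n α, ∀ y ∈ L ⊓ epar n β,
    f x y ∈ L ⊓ epar n (α + β + pf)
  eq1 : ∀ (α β γ : ZMod 2), ∀ x ∈ L ⊓ epar n α, ∀ y ∈ L ⊓ epar n β, ∀ z ∈ L ⊓ epar n γ,
    f (sbL n x y) z = sgn (α * pf) • sbL n x (f y z) + sgn (β * γ) • sbL n (f x z) y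
  eq2 : ∀ (α β γ : ZMod 2), ∀ x ∈ L ⊓ epar n α, ∀ y ∈ L ⊓ epar n β, ∀ z ∈ L ⊓ epar n γ,
    f x (sbL n y z) = sbL n (f x y) z + sgn ((pf + α) * β) • sbL n y (f x z)

/-- `D` is a superderivation of `L` of ℤ₂-degree `p`:
`D(L_α) ⊆ L_{α+p}` and `D([x,y]) = [D(x),y] + (−1)^{|D||x|}[x,D(y)]` for homogeneous
`x, y ∈ L`. (Given as a linear map on the ambient space `End Λ(n)`.) -/
structure IsSuperDer (L : Submodule ℂ (E n)) (p : ZMod 2)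
    (D : E n →ₗ[ℂ] E n) : Prop where
  maps : ∀ (α : ZMod 2), ∀ x ∈ L ⊓ epar n α, D x ∈ L ⊓ epar n (α + p)
  leib : ∀ (α β : ZMod 2), ∀ x ∈ L ⊓ epar n α, ∀ y ∈ L ⊓ epar n β,
    D (sbL n x y) = sbL n (D x) y + sgn (p * α) • sbL n x (D y)

/-- `f ∈ BDer(L)_ε`: the super-biderivation `f` has weight `ε ∈ H_L^*`, i.e.
`f(L_η, L_ζ) ⊆ L_{ε+η+ζ}` for all weights `η, ζ`. -/
def CT.HasWeight (t : CT) (n : ℕ) (f : E n →ₗ[ℂ] E n →ₗ[ℂ] E n)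
    (ε : Module.Dual ℂ (t.cartan n)) : Prop :=
  ∀ (η ζ : Module.Dual ℂ (t.cartan n)),
    ∀ x ∈ wtsp t n (t.algebra n) η, ∀ y ∈ wtsp t n (t.algebra n) ζ,
      f x y ∈ wtsp t n (t.algebra n) (ε + η + ζ)

/-- `f ∈ BDer(L)_i`: the super-biderivation `f` has ℤ-degree `i`, i.e.
`f(L_j, L_k) ⊆ L_{i+j+k}` for all `j, k ∈ ℤ`. -/
def CT.HasDeg (t : CT) (n : ℕ) (f : E n →ₗ[ℂ] E n →ₗ[ℂ] E n) (i : ℤ) : Prop :=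
  ∀ (j k : ℤ), ∀ x ∈ t.grade n j, ∀ y ∈ t.grade n k, f x y ∈ t.grade n (i + j + k)


lemma msign_add (a b : ℕ) : msign (a + b) = msign a * msign b := by simp [msign, pow_add]
lemma msign_succ (a : ℕ) : msign (a + 1) = - msign a := by simp [msign, pow_succ]
lemma msign_sq (a : ℕ) : msign a * msign a = 1 := by
  rw [← msign_add, ← two_mul]; simp [msign]
lemma msign_ne (a : ℕ) : msign a ≠ 0 := by simp [msign]
lemma msign_zero : msign 0 = 1 := by simp [msign]

lemma pd_apply (i : Fin n) (f : Lambda n) (S : Finset (Fin n)) :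
    pd n i f S = if i ∈ S then 0 else msign (S.filter (· < i)).card * f (insert i S) := rfl
lemma par_apply (f : Lambda n) (S : Finset (Fin n)) : par n f S = msign S.card * f S := rfl
lemma mulOp_apply (f g : Lambda n) (U : Finset (Fin n)) :
    mulOp n f g U = ∑ S ∈ U.powerset, msign (inversions n S (U \ S)) * f S * g (U \ S) := rfl

lemma filter_insert_card (S : Finset (Fin n)) (p : Fin n → Prop) [DecidablePred p] (k : Fin n)
    (hk : k ∉ S) : ((insert k S).filter p).card = (S.filter p).card + if p k then 1 else 0 := by
  rw [Finset.filter_insert]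
  split_ifs with h
  · rw [Finset.card_insert_of_notMem (by simp [hk])]
  · rfl

lemma pd_pd_aux (k l : Fin n) (hkl : k < l) (a : Lambda n) :
    pd n k (pd n l a) = - pd n l (pd n k a) := by
  funext S
  simp only [pd_apply, Pi.neg_apply, Finset.mem_insert]
  by_cases hk : k ∈ S
  · simp [hk]
  by_cases hl : l ∈ S
  · simp [hl]
  simp only [hk, hl, hkl.ne, hkl.ne', or_false, if_false]
  rw [filter_insert_card _ _ _ _ hk, filter_insert_card _ _ _ _ hl, Finset.insert_comm l k]
  simp only [hkl, hkl.asymm, if_true, if_false, msign_succ, add_zero]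
  ring

lemma pd_pd (k l : Fin n) (a : Lambda n) : pd n k (pd n l a) = - pd n l (pd n k a) := by
  rcases lt_trichotomy k l with h | h | h
  · exact pd_pd_aux n k l h a
  · subst h
    funext S
    simp [pd_apply]
  · rw [pd_pd_aux n l k h a, neg_neg]

lemma par_par (a : Lambda n) : par n (par n a) = a := by
  funext S; simp only [par_apply, ← mul_assoc, msign_sq, one_mul]

lemma par_pd (k : Fin n) (a : Lambda n) : par n (pd n k a) = - pd n k (par n a) := by
  funext S
  simp only [par_apply, pd_apply, Pi.neg_apply]
  split_ifs with h
  · simp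
  · rw [Finset.card_insert_of_notMem h, msign_succ]; ring

lemma inv_insert_left (S T : Finset (Fin n)) (k : Fin n) (hk : k ∉ S) :
    inversions n (insert k S) T = inversions n S T + (T.filter (· < k)).card := by
  unfold inversions
  rw [Finset.card_filter, Finset.card_filter, Finset.card_filter, Finset.sum_product,
    Finset.sum_product, Finset.sum_insert hk, add_comm]

lemma inv_insert_right (S T : Finset (Fin n)) (k : Fin n) (hk : k ∉ T) :
    inversions n S (insert k T) = inversions n S T + (S.filter (k < ·)).card := by
  unfold inversions
  rw [Finset.card_filter, Finset.card_filter, Finset.card_filter, Finset.sum_product_right,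
    Finset.sum_product_right, Finset.sum_insert hk, add_comm]

lemma card_lt_gt (S : Finset (Fin n)) (k : Fin n) (hk : k ∉ S) :
    S.card = (S.filter (· < k)).card + (S.filter (k < ·)).card := by
  rw [← Finset.card_filter_add_card_filter_not (s := S) (p := (· < k))]
  congr 2
  apply Finset.filter_congr
  intro x hx
  have : x ≠ k := fun h => hk (h ▸ hx)
  rw [not_lt]
  exact ⟨fun h => lt_of_le_of_ne h this.symm, le_of_lt⟩

lemma card_filter_sdiff (U S : Finset (Fin n)) (h : S ⊆ U) (k : Fin n) :
    (U.filter (· < k)).card = (S.filter (· < k)).card + ((U \ S).filter (· < k)).card := by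
  rw [← Finset.card_union_of_disjoint, ← Finset.filter_union, Finset.union_sdiff_of_subset h]
  exact Finset.disjoint_filter_filter Finset.disjoint_sdiff

lemma pd_mul (k : Fin n) (u v : Lambda n) :
    pd n k (mulOp n u v) = mulOp n (pd n k u) v + mulOp n (par n u) (pd n k v) := by
  funext U
  by_cases hk : k ∈ U
  · obtain ⟨W, hW, rfl⟩ : ∃ W, k ∉ W ∧ U = insert k W :=
      ⟨U.erase k, Finset.notMem_erase _ _, (Finset.insert_erase hk).symm⟩
    rw [pd_apply, if_pos hk, Pi.add_apply, mulOp_apply, mulOp_apply,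
      Finset.sum_powerset_insert hW, Finset.sum_powerset_insert hW]
    symm
    rw [add_add_add_comm, ← Finset.sum_add_distrib, ← Finset.sum_add_distrib,
      ← Finset.sum_add_distrib]
    apply Finset.sum_eq_zero
    intro S hS
    rw [Finset.mem_powerset] at hS
    have hkS : k ∉ S := fun h => hW (hS h)
    have h1 : insert k W \ S = insert k (W \ S) := by
      rw [Finset.insert_sdiff_of_notMem _ hkS]
    have h2 : insert k W \ insert k S = W \ S := by
      ext x; simp only [Finset.mem_sdiff, Finset.mem_insert]
      constructor
      · rintro ⟨h | h, h'⟩ <;> tauto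
      · rintro ⟨h, h'⟩
        refine ⟨Or.inr h, ?_⟩
        rintro (rfl | h'') <;> tauto
    have h3 : k ∉ W \ S := fun h => hW (Finset.mem_sdiff.1 h).1
    rw [h1, h2]
    simp only [pd_apply, par_apply, Finset.mem_insert_self, if_true, hkS, if_false, h3,
      mul_zero, zero_mul, add_zero, zero_add]
    rw [inv_insert_left n _ _ _ hkS, inv_insert_right n _ _ _ h3,
      Finset.card_insert_of_notMem hkS, msign_succ, card_lt_gt n S k hkS]
    simp only [msign_add]
    have := msign_sq ((W \ S).filter (· < k)).card
    linear_combination (- msign (inversions n S (W \ S)) * msign (S.filter (· < k)).card *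
      msign (S.filter (k < ·)).card * u (insert k S) * v (insert k (W \ S))) * this
  · rw [pd_apply, if_neg hk, Pi.add_apply, mulOp_apply, mulOp_apply, mulOp_apply,
      Finset.sum_powerset_insert hk, mul_add, add_comm, Finset.mul_sum, Finset.mul_sum]
    congr 1
    · apply Finset.sum_congr rfl
      intro S hS
      rw [Finset.mem_powerset] at hS
      have hkS : k ∉ S := fun h => hk (hS h)
      have h2 : insert k U \ insert k S = U \ S := by
        ext x; simp only [Finset.mem_sdiff, Finset.mem_insert]
        constructor
        · rintro ⟨h | h, h'⟩ <;> tauto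
        · rintro ⟨h, h'⟩
          refine ⟨Or.inr h, ?_⟩
          rintro (rfl | h'') <;> tauto
      rw [h2, inv_insert_left n _ _ _ hkS, card_filter_sdiff n U S hS, pd_apply, if_neg hkS]
      simp only [msign_add]
      have := msign_sq ((U \ S).filter (· < k)).card
      linear_combination (msign (inversions n S (U \ S)) * msign (S.filter (· < k)).card *
        u (insert k S) * v (U \ S)) * this
    · apply Finset.sum_congr rfl
      intro S hS
      rw [Finset.mem_powerset] at hS
      have hkS : k ∉ S := fun h => hk (hS h)
      have h3 : k ∉ U \ S := fun h => hk (Finset.mem_sdiff.1 h).1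
      have h1 : insert k U \ S = insert k (U \ S) := by
        rw [Finset.insert_sdiff_of_notMem _ hkS]
      rw [h1, inv_insert_right n _ _ _ h3, card_filter_sdiff n U S hS, pd_apply, if_neg h3,
        par_apply, card_lt_gt n S k hkS]
      simp only [msign_add]
      ring

lemma par_mul (u v : Lambda n) : par n (mulOp n u v) = mulOp n (par n u) (par n v) := by
  funext U
  simp only [par_apply, mulOp_apply, Finset.mul_sum]
  apply Finset.sum_congr rfl
  intro S hS
  rw [Finset.mem_powerset] at hS
  rw [← Finset.card_sdiff_add_card_eq_card hS, msign_add]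
  ring

/-! monomials -/
lemma mono_self (S : Finset (Fin n)) : mono n S S = 1 := by simp [mono]
lemma mono_ne {S T : Finset (Fin n)} (h : T ≠ S) : mono n S T = 0 := by simp [mono, h]

lemma par_mono (S : Finset (Fin n)) : par n (mono n S) = msign S.card • mono n S := by
  funext T
  simp only [par_apply, mono, Pi.smul_apply, smul_eq_mul]
  split_ifs with h
  · rw [h]
  · simp

lemma pd_mono_notMem {i : Fin n} {S : Finset (Fin n)} (h : i ∉ S) : pd n i (mono n S) = 0 := by
  funext T
  simp only [pd_apply, mono, Pi.zero_apply]
  split_ifs with h1 h2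
  · rfl
  · exact absurd (h2 ▸ Finset.mem_insert_self i T) h
  · simp

lemma pd_mono_mem {i : Fin n} {S : Finset (Fin n)} (h : i ∈ S) :
    pd n i (mono n S) = msign ((S.erase i).filter (· < i)).card • mono n (S.erase i) := by
  funext T
  simp only [pd_apply, mono, Pi.smul_apply, smul_eq_mul]
  by_cases h1 : i ∈ T
  · have : T ≠ S.erase i := fun h => by rw [h] at h1; simp at h1
    simp [h1, this]
  · by_cases h2 : T = S.erase i
    · subst h2
      simp [Finset.insert_erase h]
    · have : insert i T ≠ S := fun h' => h2 (by rw [← h', Finset.erase_insert h1])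
      simp [h1, h2, this]

lemma pd_mono_insert {i : Fin n} {S : Finset (Fin n)} (h : i ∉ S) :
    pd n i (mono n (insert i S)) = msign (S.filter (· < i)).card • mono n S := by
  rw [pd_mono_mem n (Finset.mem_insert_self i S), Finset.erase_insert h]

lemma mul_one' (u : Lambda n) : mulOp n u (mono n ∅) = u := by
  funext U
  rw [mulOp_apply, Finset.sum_eq_single U]
  · simp [mono, inversions, msign_zero]
  · intro S hS hSU
    rw [Finset.mem_powerset] at hS
    rw [mono_ne, mul_zero]
    intro h
    exact hSU (Finset.Subset.antisymm hS (Finset.sdiff_eq_empty_iff_subset.1 h))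
  · intro h; simp at h

lemma mul_mono_disj {S T : Finset (Fin n)} (h : Disjoint S T) :
    mulOp n (mono n S) (mono n T) = msign (inversions n S T) • mono n (S ∪ T) := by
  funext U
  rw [mulOp_apply, Pi.smul_apply, smul_eq_mul]
  by_cases hU : U = S ∪ T
  · subst hU
    rw [Finset.sum_eq_single S]
    · rw [Finset.union_sdiff_cancel_left h]; simp [mono]
    · intro R _ hR; rw [mono_ne n hR]; simp
    · intro h; exact absurd (Finset.mem_powerset.2 Finset.subset_union_left) h
  · rw [mono_ne n hU, mul_zero]
    apply Finset.sum_eq_zero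
    intro R hR
    rw [Finset.mem_powerset] at hR
    by_cases h1 : R = S
    · subst h1
      rw [mono_ne (S := T), mul_zero]
      intro h2
      exact hU (by rw [← h2, Finset.union_sdiff_of_subset hR])
    · rw [mono_ne n h1]; simp

lemma mul_mono_not {S T : Finset (Fin n)} (h : ¬ Disjoint S T) :
    mulOp n (mono n S) (mono n T) = 0 := by
  funext U
  rw [mulOp_apply, Pi.zero_apply]
  apply Finset.sum_eq_zero
  intro R hR
  by_cases h1 : R = S
  · subst h1
    rw [mono_ne (S := T), mul_zero]
    intro h2
    exact h (h2 ▸ Finset.disjoint_sdiff)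
  · rw [mono_ne n h1]; simp

lemma lam_sum (a : Lambda n) : a = ∑ S, a S • mono n S := by
  funext T
  rw [Finset.sum_apply, Finset.sum_eq_single T]
  · simp [mono]
  · intro S _ h; simp [mono, h.symm]
  · simp

lemma cidx_cidx (i : Fin n) : cidx n (cidx n i) = i := by
  apply Fin.ext
  simp only [cidx]
  have := i.isLt
  split_ifs <;> omega

lemma cidx_inj {i j : Fin n} (h : cidx n i = cidx n j) : i = j := by
  rw [← cidx_cidx n i, h, cidx_cidx]


lemma sgn_zero : sgn 0 = 1 := by simp [sgn]
lemma sgn_one : sgn 1 = -1 := by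
  have : (1 : ZMod 2).val = 1 := rfl
  simp [sgn, this]
lemma zmod2_cases (a : ZMod 2) : a = 0 ∨ a = 1 := by revert a; decide
lemma zmod2_add_self (a : ZMod 2) : a + a = 0 := by revert a; decide
lemma sgn_ne (a : ZMod 2) : sgn a ≠ 0 := by
  rcases zmod2_cases a with rfl | rfl <;> simp [sgn_zero, sgn_one]
lemma sgn_add (a b : ZMod 2) : sgn (a + b) = sgn a * sgn b := by
  rcases zmod2_cases a with rfl | rfl <;> rcases zmod2_cases b with rfl | rfl <;>
    simp [sgn_zero, sgn_one, zmod2_add_self]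
lemma sgn_cast (k : ℕ) : sgn (k : ZMod 2) = msign k := by
  induction k with
  | zero => simp [sgn_zero, msign_zero]
  | succ k ih => rw [Nat.cast_succ, sgn_add, ih, sgn_one, msign_succ]; ring

lemma par_of_lpar {q : ZMod 2} {f : Lambda n} (hf : f ∈ lpar n q) : par n f = sgn q • f := by
  funext S
  rw [par_apply, Pi.smul_apply, smul_eq_mul]
  by_cases h : (S.card : ZMod 2) = q
  · rw [← h, sgn_cast]
  · rw [hf S h]; simp

lemma lpar_of_par {q : ZMod 2} {f : Lambda n} (hf : par n f = sgn q • f) : f ∈ lpar n q := by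
  intro S hS
  have := congrFun hf S
  rw [par_apply, Pi.smul_apply, smul_eq_mul, ← sgn_cast] at this
  generalize (S.card : ZMod 2) = r at *
  rcases zmod2_cases q with rfl | rfl <;> rcases zmod2_cases r with rfl | rfl <;>
    simp [sgn_zero, sgn_one] at *
  · linear_combination (-1/2 : ℂ) * this
  · linear_combination (1/2 : ℂ) * this

lemma mono_lpar (S : Finset (Fin n)) : mono n S ∈ lpar n (S.card : ZMod 2) :=
  lpar_of_par n (by rw [par_mono, sgn_cast])

lemma E_ext {D F : E n} (h : ∀ S, D (mono n S) = F (mono n S)) : D = F := by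
  apply LinearMap.ext
  intro a
  rw [lam_sum n a, map_sum, map_sum]
  exact Finset.sum_congr rfl (fun S _ => by rw [map_smul, map_smul, h])

lemma epar_conj {α : ZMod 2} {D : E n} (hD : D ∈ epar n α) :
    par n * D * par n = sgn α • D := by
  apply E_ext
  intro S
  simp only [Module.End.mul_apply, LinearMap.smul_apply]
  have h1 := mono_lpar n S
  rw [par_of_lpar n h1, map_smul, map_smul, par_of_lpar n (hD _ _ h1), sgn_add, smul_smul,
    ← mul_assoc, ← sgn_add, zmod2_add_self, sgn_zero, one_mul]

lemma epar_iff {α : ZMod 2} {D : E n} : D ∈ epar n α ↔ par n * D * par n = sgn α • D := by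
  refine ⟨epar_conj n, fun h q f hf => lpar_of_par n ?_⟩
  have h2 := LinearMap.congr_fun h (par n f)
  simp only [Module.End.mul_apply, LinearMap.smul_apply, par_par] at h2
  rw [h2, par_of_lpar n hf, map_smul, smul_smul, sgn_add, mul_comm]

lemma par_mul_par : par n * par n = 1 := by
  apply LinearMap.ext; intro a; simp [par_par]

lemma epar_mul {α β : ZMod 2} {D F : E n} (hD : D ∈ epar n α) (hF : F ∈ epar n β) :
    D * F ∈ epar n (α + β) := by
  intro q f hf
  have := hD _ _ (hF _ _ hf)
  rw [Module.End.mul_apply]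
  convert this using 2
  ring

lemma sbL_apply (D F : E n) : sbL n D F = sbFun n D F := rfl

lemma sbL_hom {α β : ZMod 2} {D F : E n} (hD : D ∈ epar n α) (hF : F ∈ epar n β) :
    sbL n D F = D * F - sgn (α * β) • (F * D) := by
  rw [sbL_apply, sbFun, epar_conj n hD, epar_conj n hF]
  rcases zmod2_cases α with rfl | rfl <;> rcases zmod2_cases β with rfl | rfl <;>
    simp only [sgn_zero, sgn_one, mul_zero, zero_mul, mul_one, add_mul, sub_mul,
      smul_mul_assoc, mul_smul_comm] <;> module

lemma sbL_epar {α β : ZMod 2} {D F : E n} (hD : D ∈ epar n α) (hF : F ∈ epar n β) :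
    sbL n D F ∈ epar n (α + β) := by
  rw [sbL_hom n hD hF]
  refine Submodule.sub_mem _ (epar_mul n hD hF) (Submodule.smul_mem _ _ ?_)
  rw [add_comm]; exact epar_mul n hF hD

lemma sbL_skew {α β : ZMod 2} {D F : E n} (hD : D ∈ epar n α) (hF : F ∈ epar n β) :
    sbL n D F = (- sgn (α * β)) • sbL n F D := by
  rw [sbL_hom n hD hF, sbL_hom n hF hD, mul_comm β α]
  rcases zmod2_cases α with rfl | rfl <;> rcases zmod2_cases β with rfl | rfl <;>
    simp only [sgn_zero, sgn_one, mul_zero, zero_mul, mul_one] <;> module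

lemma jacobi2 {α β γ : ZMod 2} {x y z : E n} (hx : x ∈ epar n α) (hy : y ∈ epar n β)
    (hz : z ∈ epar n γ) :
    sbL n x (sbL n y z) = sbL n (sbL n x y) z + sgn (α * β) • sbL n y (sbL n x z) := by
  rw [sbL_hom n hx (sbL_epar n hy hz), sbL_hom n (sbL_epar n hx hy) hz,
    sbL_hom n hy (sbL_epar n hx hz), sbL_hom n hy hz, sbL_hom n hx hz, sbL_hom n hx hy]
  rcases zmod2_cases α with rfl | rfl <;> rcases zmod2_cases β with rfl | rfl <;>
    rcases zmod2_cases γ with rfl | rfl <;>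
    simp only [sgn_zero, sgn_one, mul_zero, zero_mul, mul_one, zmod2_add_self, add_zero,
      zero_add, one_mul, mul_sub, sub_mul, mul_add, add_mul, smul_mul_assoc, mul_smul_comm,
      smul_sub, smul_smul, mul_assoc] <;> module

lemma jacobi1 {α β γ : ZMod 2} {x y z : E n} (hx : x ∈ epar n α) (hy : y ∈ epar n β)
    (hz : z ∈ epar n γ) :
    sbL n (sbL n x y) z = sbL n x (sbL n y z) + sgn (β * γ) • sbL n (sbL n x z) y := by
  rw [sbL_hom n hx (sbL_epar n hy hz), sbL_hom n (sbL_epar n hx hy) hz,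
    sbL_hom n (sbL_epar n hx hz) hy, sbL_hom n hy hz, sbL_hom n hx hz, sbL_hom n hx hy]
  rcases zmod2_cases α with rfl | rfl <;> rcases zmod2_cases β with rfl | rfl <;>
    rcases zmod2_cases γ with rfl | rfl <;>
    simp only [sgn_zero, sgn_one, mul_zero, zero_mul, mul_one, zmod2_add_self, add_zero,
      zero_add, one_mul, mul_sub, sub_mul, mul_add, add_mul, smul_mul_assoc, mul_smul_comm,
      smul_sub, smul_smul, mul_assoc] <;> module

/-! the operators `DHmap` -/
lemma DH_def (a : Lambda n) :
    DHmap n a = ∑ i, mulOp n (pd n i (par n a)) * pd n (cidx n i) := rfl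

lemma DH_apply (a v : Lambda n) :
    DHmap n a v = ∑ i, mulOp n (pd n i (par n a)) (pd n (cidx n i) v) := by
  rw [DH_def, LinearMap.sum_apply]; rfl

lemma pd_epar (k : Fin n) : pd n k ∈ epar n 1 := by
  rw [epar_iff]
  apply LinearMap.ext; intro a
  simp [par_pd, par_par, sgn_one]

lemma par_DH (a v : Lambda n) : par n (DHmap n a v) = DHmap n (par n a) (par n v) := by
  rw [DH_apply, DH_apply, map_sum]
  refine Finset.sum_congr rfl fun i _ => ?_
  rw [par_mul, par_pd, par_pd]
  simp

lemma DH_epar {q : ZMod 2} {a : Lambda n} (ha : a ∈ lpar n q) : DHmap n a ∈ epar n q := by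
  rw [epar_iff]
  apply LinearMap.ext; intro v
  simp only [Module.End.mul_apply, LinearMap.smul_apply, par_DH, par_par]
  rw [par_of_lpar n ha, map_smul, LinearMap.smul_apply]

lemma pd_DH (k : Fin n) (a v : Lambda n) :
    pd n k (DHmap n a v) = DHmap n (pd n k a) v + DHmap n (par n a) (pd n k v) := by
  rw [DH_apply, DH_apply, DH_apply, map_sum, ← Finset.sum_add_distrib]
  refine Finset.sum_congr rfl fun i _ => ?_
  rw [pd_mul, pd_pd n k i, par_pd n i, par_pd n k, pd_pd n k (cidx n i)]
  simp

lemma sbL_pd_DH (k : Fin n) (a : Lambda n) : sbL n (pd n k) (DHmap n a) = DHmap n (pd n k a) := by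
  rw [lam_sum n a]
  simp only [map_sum, map_smul]
  refine Finset.sum_congr rfl fun S _ => ?_
  congr 1
  rw [sbL_hom n (pd_epar n k) (DH_epar n (mono_lpar n S))]
  apply LinearMap.ext; intro v
  simp only [LinearMap.sub_apply, Module.End.mul_apply, LinearMap.smul_apply, one_mul]
  rw [pd_DH, par_of_lpar n (mono_lpar n S), map_smul, LinearMap.smul_apply]
  simp

lemma DH_mono_one (j : Fin n) : DHmap n (mono n {j}) = - pd n (cidx n j) := by
  apply LinearMap.ext; intro v
  rw [DH_apply, Finset.sum_eq_single j]
  · rw [par_mono, map_smul, pd_mono_mem n (Finset.mem_singleton_self j)]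
    have hc : ∀ u, mulOp n (mono n ∅) u = u := by
      intro u; funext U
      rw [mulOp_apply, Finset.sum_eq_single ∅]
      · simp [mono, inversions, msign_zero]
      · intro S _ hS; rw [mono_ne n hS]; simp
      · simp
    simp [msign, hc]
  · intro i _ hi
    rw [par_mono, map_smul, pd_mono_notMem n (by simpa using hi)]
    simp
  · simp

lemma pd_eq_DH (k : Fin n) : pd n k = - DHmap n (mono n {cidx n k}) := by
  rw [DH_mono_one, cidx_cidx, neg_neg]

lemma DH_mono_empty : DHmap n (mono n ∅) = 0 := by
  apply LinearMap.ext; intro v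
  rw [DH_apply]
  apply Finset.sum_eq_zero
  intro i _
  rw [par_mono, map_smul, pd_mono_notMem n (by simp)]
  simp

lemma pd_all_zero {a : Lambda n} (h : ∀ k, pd n k a = 0) (S : Finset (Fin n)) (hS : S ≠ ∅) :
    a S = 0 := by
  obtain ⟨k, hk⟩ := Finset.nonempty_iff_ne_empty.2 hS
  have := congrFun (h k) (S.erase k)
  rw [pd_apply, if_neg (Finset.notMem_erase _ _), Finset.insert_erase hk] at this
  exact (mul_eq_zero.1 this).resolve_left (msign_ne _)

lemma DH_apply_x (a : Lambda n) (k : Fin n) :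
    DHmap n a (mono n {cidx n k}) = pd n k (par n a) := by
  rw [DH_apply, Finset.sum_eq_single k]
  · rw [pd_mono_mem n (Finset.mem_singleton_self _)]
    simp [msign, mul_one']
  · intro i _ hi
    rw [pd_mono_notMem n]
    · simp
    · simp only [Finset.mem_singleton]; intro h; exact hi (cidx_inj n h)
  · simp

lemma DH_zero_iff (a : Lambda n) : DHmap n a = 0 ↔ ∀ S, S ≠ ∅ → a S = 0 := by
  constructor
  · intro h S hS
    have h1 : ∀ k, pd n k (par n a) = 0 := by
      intro k; rw [← DH_apply_x, h]; rfl
    have := pd_all_zero n h1 S hS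
    rw [par_apply] at this
    exact (mul_eq_zero.1 this).resolve_left (msign_ne _)
  · intro h
    have : a = a ∅ • mono n ∅ := by
      funext S
      by_cases hS : S = ∅
      · simp [hS, mono]
      · simp [h S hS, mono, hS]
    rw [this, map_smul, DH_mono_empty, smul_zero]

lemma DH_top (a b : Lambda n) : DHmap n a b Finset.univ = 0 := by
  have hpd : ∀ k (u : Lambda n), pd n k u Finset.univ = 0 := by
    intro k u; rw [pd_apply, if_pos (Finset.mem_univ k)]
  have hdd : ∑ i, pd n i (pd n (cidx n i) b) = 0 := by
    let e : Fin n ≃ Fin n := ⟨cidx n, cidx n, cidx_cidx n, cidx_cidx n⟩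
    have h1 : ∑ i, pd n i (pd n (cidx n i) b) = ∑ i, pd n (cidx n i) (pd n i b) := by
      rw [← Equiv.sum_comp e]
      refine Finset.sum_congr rfl fun i _ => ?_
      show pd n (cidx n i) (pd n (cidx n (cidx n i)) b) = _
      rw [cidx_cidx]
    have h2 : ∑ i, pd n (cidx n i) (pd n i b) = - ∑ i, pd n i (pd n (cidx n i) b) := by
      rw [← Finset.sum_neg_distrib]
      exact Finset.sum_congr rfl fun i _ => pd_pd n _ _ _
    rw [h2] at h1
    have h3 := self_eq_neg.1 h1
    exact h3
  have h4 : DHmap n a b = ∑ i, pd n i (mulOp n (par n a) (pd n (cidx n i) b)) := by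
    rw [DH_apply]
    simp only [pd_mul, par_par]
    rw [Finset.sum_add_distrib, ← map_sum, hdd, map_zero, add_zero]
  rw [h4, Finset.sum_apply]
  exact Finset.sum_eq_zero fun i _ => hpd _ _

lemma DH_empty (a v : Lambda n) :
    DHmap n a v ∅ = ∑ i, pd n i (par n a) ∅ * pd n (cidx n i) v ∅ := by
  rw [DH_apply, Finset.sum_apply]
  refine Finset.sum_congr rfl fun i _ => ?_
  rw [mulOp_apply]
  simp [inversions, msign_zero]

lemma pd_empty (k : Fin n) (a : Lambda n) : pd n k a ∅ = a {k} := by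
  rw [pd_apply]; simp [msign_zero]

lemma DH_empty_left {a : Lambda n} (ha : ∀ k, a {k} = 0) (v : Lambda n) : DHmap n a v ∅ = 0 := by
  rw [DH_empty]
  refine Finset.sum_eq_zero fun i _ => ?_
  rw [pd_empty, par_apply, ha]; simp

lemma DH_empty_right (a : Lambda n) {v : Lambda n} (hv : ∀ k, v {k} = 0) : DHmap n a v ∅ = 0 := by
  rw [DH_empty]
  refine Finset.sum_eq_zero fun i _ => ?_
  rw [pd_empty n _ v, hv]; simp


lemma pd_mono_cases (k : Fin n) (S : Finset (Fin n)) :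
    pd n k (mono n S) = 0 ∨ (k ∈ S ∧ ∃ c : ℂ, pd n k (mono n S) = c • mono n (S.erase k)) := by
  by_cases h : k ∈ S
  · exact Or.inr ⟨h, _, pd_mono_mem n h⟩
  · exact Or.inl (pd_mono_notMem n h)

lemma mono_single_zero {S : Finset (Fin n)} (h : 2 ≤ S.card) (k : Fin n) : mono n S {k} = 0 := by
  apply mono_ne
  rintro rfl
  simp at h

lemma mono_bracket (m : ℕ) : ∀ S T : Finset (Fin n), S.card + T.card = m →
    sbL n (DHmap n (mono n S)) (DHmap n (mono n T)) = DHmap n (DHmap n (mono n S) (mono n T)) := by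
  induction m using Nat.strong_induction_on with
  | _ m ih =>
  intro S T hm
  by_cases hS0 : S.card = 0
  · rw [Finset.card_eq_zero] at hS0
    subst hS0
    simp [DH_mono_empty]
  by_cases hT0 : T.card = 0
  · rw [Finset.card_eq_zero] at hT0
    subst hT0
    rw [DH_mono_empty, map_zero, DH_apply]
    symm
    rw [Finset.sum_eq_zero, map_zero]
    intro i _
    rw [pd_mono_notMem n (by simp), map_zero]
  by_cases hS1 : S.card = 1
  · obtain ⟨j, rfl⟩ := Finset.card_eq_one.1 hS1
    rw [DH_mono_one, map_neg, LinearMap.neg_apply, sbL_pd_DH, LinearMap.neg_apply, map_neg]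
  by_cases hT1 : T.card = 1
  · obtain ⟨j, rfl⟩ := Finset.card_eq_one.1 hT1
    have h1 := DH_apply_x n (mono n S) (cidx n j)
    rw [cidx_cidx] at h1
    rw [h1, par_mono, DH_mono_one, map_neg,
      sbL_skew n (DH_epar n (mono_lpar n S)) (pd_epar n _), sbL_pd_DH, mul_one, sgn_cast]
    simp only [map_smul]
    module
  have hS2 : 2 ≤ S.card := by omega
  have hT2 : 2 ≤ T.card := by omega
  have ha := mono_lpar n S
  have hb := mono_lpar n T
  have hDa := DH_epar n ha
  have hDb := DH_epar n hb
  set a := mono n S with hadef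
  set b := mono n T with hbdef
  set Y := sbL n (DHmap n a) (DHmap n b) - DHmap n (DHmap n a b) with hY
  have hab : DHmap n a b ∈ lpar n ((S.card : ZMod 2) + T.card) := by
    rw [add_comm]; exact hDa _ _ hb
  have hYp : Y ∈ epar n ((S.card : ZMod 2) + T.card) :=
    Submodule.sub_mem _ (sbL_epar n hDa hDb) (DH_epar n hab)
  have hcomm : ∀ k, sbL n (pd n k) Y = 0 := by
    intro k
    rw [hY, map_sub, jacobi2 n (pd_epar n k) hDa hDb, sbL_pd_DH, sbL_pd_DH, sbL_pd_DH, pd_DH,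
      par_of_lpar n ha, one_mul, map_add, map_smul, LinearMap.smul_apply, map_smul]
    have e1 : sbL n (DHmap n (pd n k a)) (DHmap n b) = DHmap n (DHmap n (pd n k a) b) := by
      rcases pd_mono_cases n k S with h | ⟨hk, c, h⟩
      · rw [hadef, h]; simp
      · rw [hadef, h]
        have := ih ((S.erase k).card + T.card)
          (by rw [Finset.card_erase_of_mem hk]; omega) (S.erase k) T rfl
        simp only [map_smul, LinearMap.smul_apply]
        rw [this]
    have e2 : sbL n (DHmap n a) (DHmap n (pd n k b)) = DHmap n (DHmap n a (pd n k b)) := by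
      rcases pd_mono_cases n k T with h | ⟨hk, c, h⟩
      · rw [hbdef, h]; simp
      · rw [hbdef, h]
        have := ih (S.card + (T.erase k).card)
          (by rw [Finset.card_erase_of_mem hk]; omega) S (T.erase k) rfl
        simp only [map_smul]
        rw [this]
    rw [e1, e2, sub_self]
  have hpdY : ∀ k v, ∃ c : ℂ, pd n k (Y v) = c • Y (pd n k v) := by
    intro k v
    have h := hcomm k
    rw [sbL_hom n (pd_epar n k) hYp] at h
    refine ⟨sgn (1 * ((S.card : ZMod 2) + T.card)), ?_⟩
    exact sub_eq_zero.1 (LinearMap.congr_fun h v)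
  have hYe : ∀ v, Y v ∅ = 0 := by
    intro v
    rw [hY, sbL_hom n hDa hDb]
    simp only [LinearMap.sub_apply, Module.End.mul_apply, LinearMap.smul_apply, Pi.sub_apply,
      Pi.smul_apply]
    rw [DH_empty_left n (mono_single_zero n hS2), DH_empty_left n (mono_single_zero n hT2),
      DH_empty_left]
    · simp
    · intro k
      rw [← pd_empty n k (DHmap n a b), pd_DH, Pi.add_apply, DH_empty_right n _ (mono_single_zero n hT2),
        DH_empty_left, add_zero]
      intro j
      rw [par_apply, hadef, mono_single_zero n hS2, mul_zero]
  have hYU : ∀ r : ℕ, ∀ U : Finset (Fin n), U.card = r → Y (mono n U) = 0 := by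
    intro r
    induction r with
    | zero =>
      intro U hU
      rw [Finset.card_eq_zero] at hU
      subst hU
      funext V
      by_cases hV : V = ∅
      · rw [hV]; exact hYe _
      · refine pd_all_zero n (fun k => ?_) V hV
        obtain ⟨c, hc⟩ := hpdY k (mono n ∅)
        rw [hc, pd_mono_notMem n (by simp), map_zero, smul_zero]
    | succ r ihr =>
      intro U hU
      funext V
      by_cases hV : V = ∅
      · rw [hV]; exact hYe _
      · refine pd_all_zero n (fun k => ?_) V hV
        obtain ⟨c, hc⟩ := hpdY k (mono n U)
        rw [hc]
        rcases pd_mono_cases n k U with h | ⟨hk, c', h⟩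
        · rw [h, map_zero, smul_zero]
        · rw [h, map_smul, ihr _ (by rw [Finset.card_erase_of_mem hk]; omega)]
          simp
  have : Y = 0 := E_ext n (fun U => hYU _ U rfl)
  exact sub_eq_zero.1 this

lemma DH_bracket (a b : Lambda n) :
    sbL n (DHmap n a) (DHmap n b) = DHmap n (DHmap n a b) := by
  conv_lhs => rw [lam_sum n a, lam_sum n b]
  conv_rhs => rw [lam_sum n a, lam_sum n b]
  simp only [map_sum, map_smul, LinearMap.sum_apply, LinearMap.smul_apply]
  refine Finset.sum_congr rfl fun S _ => ?_
  congr 1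
  refine Finset.sum_congr rfl fun T _ => ?_
  rw [mono_bracket n _ T S rfl]

lemma mem_Hn {D : E n} : D ∈ Hn n ↔ ∃ a : Lambda n, a Finset.univ = 0 ∧ DHmap n a = D := Iff.rfl

lemma mono_mem_Hn {S : Finset (Fin n)} (h : S ≠ Finset.univ) : DHmap n (mono n S) ∈ Hn n :=
  (mem_Hn n).2 ⟨_, mono_ne n h.symm, rfl⟩

lemma DHDH_mem (a b : Lambda n) : DHmap n (DHmap n a b) ∈ Hn n :=
  (mem_Hn n).2 ⟨_, DH_top n _ _, rfl⟩

lemma Hn_closed {x y : E n} (hx : x ∈ Hn n) (hy : y ∈ Hn n) : sbL n x y ∈ Hn n := by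
  obtain ⟨a, _, rfl⟩ := (mem_Hn n).1 hx
  obtain ⟨b, _, rfl⟩ := (mem_Hn n).1 hy
  rw [DH_bracket]; exact DHDH_mem n _ _

lemma X_mem {S : Finset (Fin n)} (h : S ≠ Finset.univ) :
    DHmap n (mono n S) ∈ Hn n ⊓ epar n (S.card : ZMod 2) :=
  ⟨mono_mem_Hn n h, DH_epar n (mono_lpar n S)⟩

lemma ne_univ_of_card {S : Finset (Fin n)} (h : S.card < n) : S ≠ Finset.univ := by
  rintro rfl; simp at h

lemma pd_mem (hn : 4 < n) (k : Fin n) : pd n k ∈ Hn n ⊓ epar n 1 := by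
  refine ⟨?_, pd_epar n k⟩
  rw [pd_eq_DH]
  exact Submodule.neg_mem _ (mono_mem_Hn n (ne_univ_of_card n (by simp; omega)))

lemma Hn_ind (p : E n → Prop) (h0 : p 0) (ha : ∀ x y, p x → p y → p (x + y))
    (hs : ∀ (c : ℂ) x, p x → p (c • x))
    (h : ∀ S : Finset (Fin n), S ≠ ∅ → S ≠ Finset.univ → p (DHmap n (mono n S))) :
    ∀ x ∈ Hn n, p x := by
  intro x hx
  obtain ⟨a, hau, rfl⟩ := (mem_Hn n).1 hx
  rw [lam_sum n a, map_sum]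
  refine Finset.sum_induction _ p ha h0 fun S _ => ?_
  rw [map_smul]
  by_cases h1 : S = Finset.univ
  · rw [h1, hau, zero_smul]; exact h0
  by_cases h2 : S = ∅
  · rw [h2, DH_mono_empty, smul_zero]; exact h0
  exact hs _ _ (h S h2 h1)


lemma DH_single {S T : Finset (Fin n)} {j : Fin n} (hj : j ∈ S) (hj' : cidx n j ∈ T)
    (hd : Disjoint (S.erase j) (T.erase (cidx n j)))
    (ho : ∀ i, i ≠ j → i ∈ S → cidx n i ∈ T → ¬ Disjoint (S.erase i) (T.erase (cidx n i))) :
    ∃ c : ℂ, c ≠ 0 ∧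
      DHmap n (mono n S) (mono n T) = c • mono n (S.erase j ∪ T.erase (cidx n j)) := by
  rw [DH_apply, Finset.sum_eq_single j]
  · rw [par_mono, map_smul, pd_mono_mem n hj, pd_mono_mem n hj', map_smul, map_smul, map_smul,
      LinearMap.smul_apply, LinearMap.smul_apply, mul_mono_disj n hd, smul_smul, smul_smul,
      smul_smul]
    refine ⟨_, ?_, rfl⟩
    simp [msign_ne]
  · intro i _ hi
    rw [par_mono, map_smul]
    by_cases h1 : i ∈ S
    · by_cases h2 : cidx n i ∈ T
      · rw [pd_mono_mem n h1, pd_mono_mem n h2, map_smul, map_smul, map_smul,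
          LinearMap.smul_apply, LinearMap.smul_apply, mul_mono_not n (ho i hi h1 h2)]
        simp
      · rw [pd_mono_notMem n h2, map_zero]
    · rw [pd_mono_notMem n h1]; simp
  · simp

lemma number_op (i : Fin n) (S : Finset (Fin n)) :
    mulOp n (mono n {i}) (pd n i (mono n S)) = (if i ∈ S then (1 : ℂ) else 0) • mono n S := by
  split_ifs with h
  · rw [pd_mono_mem n h, map_smul, mul_mono_disj n (by simp), smul_smul]
    have h1 : inversions n {i} (S.erase i) = ((S.erase i).filter (· < i)).card := by
      have := inv_insert_left n ∅ (S.erase i) i (by simp)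
      simpa [inversions] using this
    rw [h1, msign_sq]
    congr 1
    rw [← Finset.insert_eq, Finset.insert_erase h]
  · rw [pd_mono_notMem n h]; simp

def wt (i : Fin n) (S : Finset (Fin n)) : ℂ :=
  (if cidx n i ∈ S then (1 : ℂ) else 0) - (if i ∈ S then (1 : ℂ) else 0)

lemma wt_mono {i : Fin n} (hi : cidx n i ≠ i) :
    ∃ e : ℂ, e ≠ 0 ∧ ∀ S, DHmap n (mono n {i, cidx n i}) (mono n S) = (e * wt n i S) • mono n S := by
  refine ⟨msign ((({i, cidx n i} : Finset (Fin n)).erase i).filter (· < i)).card, msign_ne _, ?_⟩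
  intro S
  have hc2 : ({i, cidx n i} : Finset (Fin n)).card = 2 := Finset.card_pair hi.symm
  have e1 : ({i, cidx n i} : Finset (Fin n)).erase i = {cidx n i} := by
    ext x; simp only [Finset.mem_erase, Finset.mem_insert, Finset.mem_singleton]
    constructor
    · rintro ⟨h1, h2 | h2⟩
      · exact absurd h2 h1
      · exact h2
    · rintro rfl; exact ⟨hi, Or.inr rfl⟩
  have e2 : ({i, cidx n i} : Finset (Fin n)).erase (cidx n i) = {i} := by
    ext x; simp only [Finset.mem_erase, Finset.mem_insert, Finset.mem_singleton]
    constructor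
    · rintro ⟨h1, h2 | h2⟩
      · exact h2
      · exact absurd h2 h1
    · rintro rfl; exact ⟨hi.symm, Or.inl rfl⟩
  have hs : msign ((({i, cidx n i} : Finset (Fin n)).erase (cidx n i)).filter (· < cidx n i)).card
      = - msign ((({i, cidx n i} : Finset (Fin n)).erase i).filter (· < i)).card := by
    rw [e1, e2, Finset.filter_singleton, Finset.filter_singleton]
    rcases lt_or_gt_of_ne hi with h | h
    · simp [h, h.le.not_gt, msign]
    · simp [h, h.le.not_gt, msign]
  have hm2 : msign ({i, cidx n i} : Finset (Fin n)).card = 1 := by rw [hc2]; simp [msign]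
  rw [DH_apply, ← Finset.sum_subset (Finset.subset_univ {i, cidx n i}),
    Finset.sum_pair hi.symm, par_mono, hm2, one_smul, cidx_cidx,
    pd_mono_mem n (by simp : i ∈ ({i, cidx n i} : Finset (Fin n))),
    pd_mono_mem n (by simp : cidx n i ∈ ({i, cidx n i} : Finset (Fin n))), hs, map_smul, map_smul,
    LinearMap.smul_apply, LinearMap.smul_apply, e1, e2, number_op, number_op]
  · unfold wt; module
  · intro j _ hj
    rw [par_mono, map_smul, pd_mono_notMem n hj]; simp

lemma wt_apply {i : Fin n} (hi : cidx n i ≠ i) :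
    ∃ e : ℂ, e ≠ 0 ∧ ∀ (b : Lambda n) S,
      DHmap n (mono n {i, cidx n i}) b S = e * wt n i S * b S := by
  obtain ⟨e, he, h⟩ := wt_mono n hi
  refine ⟨e, he, fun b S => ?_⟩
  conv_lhs => rw [lam_sum n b]
  rw [map_sum, Finset.sum_apply, Finset.sum_eq_single S]
  · rw [map_smul, h]; simp [mono_self]; ring
  · intro T _ hT
    rw [map_smul, h]; simp [mono_ne n hT.symm]
  · simp

lemma lin_V {b : Lambda n} (hb : ∀ T : Finset (Fin n), 2 ≤ T.card → b T = 0) (k : Fin n) :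
    sbL n (pd n k) (DHmap n b) = 0 := by
  rw [sbL_pd_DH, DH_zero_iff]
  intro S hS
  rw [pd_apply]
  split_ifs with h
  · rfl
  · rw [hb, mul_zero]
    rw [Finset.card_insert_of_notMem h]
    have := Finset.card_pos.2 (Finset.nonempty_iff_ne_empty.2 hS)
    omega

lemma pd_eq_zero_coef {b : Lambda n} {k : Fin n} (h : DHmap n (pd n k b) = 0)
    {T : Finset (Fin n)} (hk : k ∈ T) (hT : 2 ≤ T.card) : b T = 0 := by
  rw [DH_zero_iff] at h
  have := h (T.erase k) (by
    rw [← Finset.card_pos.trans Finset.nonempty_iff_ne_empty, Finset.card_erase_of_mem hk]; omega)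
  rw [pd_apply, if_neg (Finset.notMem_erase _ _), Finset.insert_erase hk] at this
  exact (mul_eq_zero.1 this).resolve_left (msign_ne _)

lemma lin_form {b : Lambda n} (hb : ∀ T : Finset (Fin n), 2 ≤ T.card → b T = 0) :
    DHmap n b = ∑ j, b {cidx n j} • (- pd n j) := by
  have h1 : DHmap n (b - ∑ j, b {j} • mono n {j}) = 0 := by
    rw [DH_zero_iff]
    intro S hS
    rw [Pi.sub_apply, Finset.sum_apply]
    by_cases h2 : 2 ≤ S.card
    · rw [hb S h2, Finset.sum_eq_zero, sub_zero]
      intro j _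
      rw [Pi.smul_apply, mono_ne, smul_zero]
      rintro rfl; simp at h2
    · have := Finset.card_pos.2 (Finset.nonempty_iff_ne_empty.2 hS)
      obtain ⟨j, rfl⟩ := Finset.card_eq_one.1 (by omega : S.card = 1)
      rw [Finset.sum_eq_single j]
      · simp [mono_self]
      · intro l _ hl
        rw [Pi.smul_apply, mono_ne, smul_zero]
        simpa using hl.symm
      · simp
  rw [map_sub, sub_eq_zero] at h1
  rw [h1, map_sum]
  let e : Fin n ≃ Fin n := ⟨cidx n, cidx n, cidx_cidx n, cidx_cidx n⟩
  rw [← Equiv.sum_comp e]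
  refine Finset.sum_congr rfl fun j _ => ?_
  show DHmap n (b {cidx n j} • mono n {cidx n j}) = _
  rw [map_smul, DH_mono_one, cidx_cidx]

lemma V_form {z : E n} (hz : z ∈ Hn n) (h : ∀ k, sbL n (pd n k) z = 0) :
    ∃ c : Fin n → ℂ, z = ∑ j, c j • pd n j := by
  obtain ⟨b, _, rfl⟩ := (mem_Hn n).1 hz
  refine ⟨fun j => - b {cidx n j}, ?_⟩
  rw [lin_form]
  · refine Finset.sum_congr rfl fun j _ => ?_
    module
  · intro T hT
    obtain ⟨k, hk⟩ := Finset.card_pos.1 (by omega : 0 < T.card)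
    have := h k
    rw [sbL_pd_DH] at this
    exact pd_eq_zero_coef n this hk hT

lemma exists_avoid (hn : 4 < n) (F : Finset (Fin n)) (hF : F.card ≤ 4) : ∃ k, k ∉ F := by
  by_contra h
  push Not at h
  have : F = Finset.univ := Finset.eq_univ_of_forall h
  rw [this] at hF
  simp at hF
  omega

/-- the superderivations with values in the span of the partial derivatives vanish -/
lemma der_to_V (hn : 4 < n) {q : ZMod 2} {D : E n →ₗ[ℂ] E n} (hD : IsSuperDer n (Hn n) q D)
    (hV : ∀ S : Finset (Fin n), S ≠ Finset.univ → ∀ k,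
      sbL n (pd n k) (D (DHmap n (mono n S))) = 0) :
    ∀ z ∈ Hn n, D z = 0 := by
  have hpdm : ∀ k : Fin n, (({cidx n k} : Finset (Fin n))) ≠ Finset.univ := fun k =>
    ne_univ_of_card n (by simp; omega)
  have h1 : ∀ k, D (pd n k) = 0 := by
    intro k
    obtain ⟨c, hc⟩ := V_form n (hD.maps _ _ (pd_mem n hn k)).1 (fun l => by
      have := hV _ (hpdm k) l
      rw [pd_eq_DH n k, map_neg, map_neg, this, neg_zero])
    rw [hc]
    refine Finset.sum_eq_zero fun j _ => ?_
    obtain ⟨l, hl⟩ := exists_avoid n hn {j} (by simp)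
    obtain ⟨m, hm⟩ := exists_avoid n hn {j, l} (Finset.card_le_two.trans (by norm_num))
    simp only [Finset.mem_singleton, Finset.mem_insert, not_or] at hl hm
    have hTu : ({j, l, m} : Finset (Fin n)) ≠ Finset.univ :=
      ne_univ_of_card n (lt_of_le_of_lt Finset.card_le_three (by omega))
    have hle := hD.leib _ _ _ (pd_mem n hn k) _ (X_mem n hTu)
    rw [sbL_pd_DH, hV _ hTu k, smul_zero, add_zero, hc] at hle
    have h2 : sbL n (pd n l) (D (DHmap n (pd n k (mono n {j, l, m})))) = 0 := by
      rcases pd_mono_cases n k {j, l, m} with h | ⟨hk, c', h⟩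
      · rw [h]; simp
      · rw [h, map_smul, map_smul, map_smul, hV, smul_zero]
        exact ne_univ_of_card n (lt_of_le_of_lt ((Finset.card_erase_le).trans Finset.card_le_three)
          (by omega))
    rw [hle] at h2
    simp only [map_sum, LinearMap.sum_apply, map_smul, LinearMap.smul_apply, sbL_pd_DH] at h2
    have h3 : DHmap n (∑ i, c i • pd n l (pd n i (mono n {j, l, m}))) = 0 := by
      rw [map_sum, ← h2]
      refine Finset.sum_congr rfl fun i _ => ?_
      rw [map_smul]
    rw [DH_zero_iff] at h3
    have h4 := h3 {m} (by simp)
    rw [Finset.sum_apply, Finset.sum_eq_single j] at h4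
    · rw [Pi.smul_apply, pd_apply, if_neg (by simpa using Ne.symm hm.2), pd_apply, if_neg, mono_self] at h4
      · simp [msign_ne] at h4
        rw [h4, zero_smul]
      · simp only [Finset.mem_insert, Finset.mem_singleton, not_or]
        exact ⟨Ne.symm hl, Ne.symm hm.1⟩
    · intro i _ hi
      rw [Pi.smul_apply, pd_apply, if_neg (by simpa using Ne.symm hm.2), pd_apply]
      split_ifs with h
      · simp
      · rw [mono_ne]
        · simp
        · intro h5
          have : j ∈ (insert i (insert l {m}) : Finset (Fin n)) := by rw [h5]; simp
          simp only [Finset.mem_insert, Finset.mem_singleton] at this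
          rcases this with h6 | h6 | h6
          · exact hi h6.symm
          · exact hl h6.symm
          · exact hm.1 h6.symm
    · simp
  have h2 : ∀ S : Finset (Fin n), S.card + 2 ≤ n → D (DHmap n (mono n S)) = 0 := by
    intro S hS
    obtain ⟨k, hk⟩ : ∃ k, k ∉ S := by
      by_contra h
      push Not at h
      rw [Finset.eq_univ_of_forall h] at hS
      simp at hS
    have hu : insert k S ≠ Finset.univ :=
      ne_univ_of_card n (by rw [Finset.card_insert_of_notMem hk]; omega)
    have hle := hD.leib _ _ _ (pd_mem n hn k) _ (X_mem n hu)
    rw [sbL_pd_DH, h1, map_zero, LinearMap.zero_apply, hV _ hu, smul_zero, add_zero,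
      pd_mono_insert n hk, map_smul, map_smul] at hle
    exact (smul_eq_zero.1 hle).resolve_left (msign_ne _)
  refine Hn_ind n _ (map_zero D) (fun x y hx hy => by rw [map_add, hx, hy, add_zero])
    (fun c x hx => by rw [map_smul, hx, smul_zero]) ?_
  intro S _ hSu
  by_cases hS : S.card + 2 ≤ n
  · exact h2 S hS
  obtain ⟨m, hm⟩ : ∃ m, m ∉ S := by
    by_contra h
    push Not at h
    exact hSu (Finset.eq_univ_of_forall h)
  have hSm : S = Finset.univ.erase m := by
    apply Finset.eq_of_subset_of_card_le
    · intro x hx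
      simp only [Finset.mem_erase, Finset.mem_univ, and_true]
      rintro rfl; exact hm hx
    · rw [Finset.card_erase_of_mem (Finset.mem_univ _)]
      simp; omega
  obtain ⟨b, hb⟩ := exists_avoid n hn {m, cidx n m} (Finset.card_le_two.trans (by norm_num))
  obtain ⟨c, hc⟩ := exists_avoid n hn {m, cidx n m, b} (Finset.card_le_three.trans (by norm_num))
  simp only [Finset.mem_singleton, Finset.mem_insert, not_or] at hb hc
  have hA3 : ({cidx n m, b, c} : Finset (Fin n)).card ≤ 3 := Finset.card_le_three
  have hB : ((Finset.univ : Finset (Fin n)) \ {b, c}).card + 2 ≤ n := by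
    rw [Finset.card_sdiff_of_subset (Finset.subset_univ _), Finset.card_pair (Ne.symm hc.2.2)]
    simp; omega
  have hcm : ∀ x, cidx n x = m → x = cidx n m := by
    intro x hx; rw [← hx, cidx_cidx]
  obtain ⟨e, he, hbr⟩ := DH_single n (S := {cidx n m, b, c}) (T := Finset.univ \ {b, c})
    (j := cidx n m) (by simp) (by
      rw [cidx_cidx]
      simp only [Finset.mem_sdiff, Finset.mem_univ, true_and, Finset.mem_insert,
        Finset.mem_singleton, not_or]
      exact ⟨Ne.symm hb.1, Ne.symm hc.1⟩)
    (by
      rw [Finset.disjoint_left]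
      intro x hx hx2
      simp only [Finset.mem_sdiff, Finset.mem_univ, true_and, Finset.mem_insert,
        Finset.mem_singleton, not_or, Finset.mem_erase] at hx hx2
      tauto)
    (by
      intro i hi hiS _
      rw [Finset.not_disjoint_iff]
      refine ⟨cidx n m, ?_, ?_⟩
      · simp [Ne.symm hi]
      · simp only [Finset.mem_sdiff, Finset.mem_univ, true_and, Finset.mem_insert,
          Finset.mem_singleton, not_or, Finset.mem_erase] at hiS ⊢
        refine ⟨fun h => ?_, Ne.symm hb.2, Ne.symm hc.2.1⟩
        have h' : m = i := cidx_inj n h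
        subst h'
        rcases hiS with h | h | h
        · exact hi h
        · exact hb.1 h.symm
        · exact hc.1 h.symm)
  have hset : ({cidx n m, b, c} : Finset (Fin n)).erase (cidx n m) ∪
      (Finset.univ \ {b, c}).erase (cidx n (cidx n m)) = S := by
    rw [hSm, cidx_cidx]
    ext x
    simp only [Finset.mem_union, Finset.mem_sdiff, Finset.mem_univ, true_and, Finset.mem_insert,
      Finset.mem_singleton, not_or, Finset.mem_erase, and_true]
    constructor
    · rintro (⟨h1, h | h | h⟩ | ⟨h, _⟩)
      · exact absurd h h1
      · rw [h]; exact hb.1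
      · rw [h]; exact hc.1
      · exact h
    · intro h
      by_cases hxb : x = b
      · left; rw [hxb]; exact ⟨hb.2, Or.inr (Or.inl rfl)⟩
      by_cases hxc : x = c
      · left; rw [hxc]; exact ⟨hc.2.1, Or.inr (Or.inr rfl)⟩
      exact Or.inr ⟨h, hxb, hxc⟩
  rw [hset] at hbr
  have hle := hD.leib _ _ _ (X_mem n (S := {cidx n m, b, c}) (ne_univ_of_card n (by omega)))
    _ (X_mem n (S := Finset.univ \ {b, c}) (ne_univ_of_card n (by omega)))
  rw [h2 _ (by omega), h2 _ hB, DH_bracket, hbr] at hle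
  simp only [map_smul, map_zero, LinearMap.zero_apply, smul_zero, add_zero] at hle
  exact (smul_eq_zero.1 hle).resolve_left he


lemma ad_centralizer (hn : 4 < n) (i : Fin n) {a : Lambda n}
    (h : ∀ S : Finset (Fin n), S ≠ Finset.univ → DHmap n (DHmap n a (pd n i (mono n S))) = 0) :
    ∃ c : ℂ, DHmap n a = c • pd n i := by
  have hins : ∀ R : Finset (Fin n), i ∉ R → R.card ≤ 2 → DHmap n (DHmap n a (mono n R)) = 0 := by
    intro R hi hR
    have := h (insert i R) (ne_univ_of_card n (by rw [Finset.card_insert_of_notMem hi]; omega))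
    rw [pd_mono_insert n hi, map_smul, map_smul] at this
    exact (smul_eq_zero.1 this).resolve_left (msign_ne _)
  have hlin : ∀ T : Finset (Fin n), 2 ≤ T.card → a T = 0 := by
    intro T hT
    obtain ⟨l, hl, hli⟩ := Finset.exists_mem_ne (by omega : 1 < T.card) (cidx n i)
    have h1 := hins {cidx n l} (by
      simp only [Finset.mem_singleton]; rintro rfl; exact hli (cidx_cidx n l).symm) (by simp)
    rw [DH_apply_x] at h1
    have h2 := pd_eq_zero_coef n h1 hl hT
    rw [par_apply] at h2
    exact (mul_eq_zero.1 h2).resolve_left (msign_ne _)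
  have hform := lin_form n hlin
  have hj : ∀ j, j ≠ i → a {cidx n j} = 0 := by
    intro j hji
    obtain ⟨k, hk⟩ := exists_avoid n hn {i, j} (Finset.card_le_two.trans (by norm_num))
    simp only [Finset.mem_singleton, Finset.mem_insert, not_or] at hk
    have h1 := hins {j, k} (by
      simp only [Finset.mem_singleton, Finset.mem_insert, not_or]
      exact ⟨Ne.symm hji, Ne.symm hk.1⟩) Finset.card_le_two
    rw [DH_zero_iff] at h1
    have h2 := h1 {k} (by simp)
    rw [hform, LinearMap.sum_apply, Finset.sum_apply, Finset.sum_eq_single j] at h2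
    · rw [LinearMap.smul_apply, LinearMap.neg_apply, Pi.smul_apply, Pi.neg_apply, pd_apply,
        if_neg (by simpa using Ne.symm hk.2), mono_self] at h2
      simpa [msign_ne] using h2
    · intro l _ hl
      rw [LinearMap.smul_apply, LinearMap.neg_apply, Pi.smul_apply, Pi.neg_apply, pd_apply]
      split_ifs with h3
      · simp
      · rw [mono_ne]
        · simp
        · intro h5
          have : j ∈ (insert l {k} : Finset (Fin n)) := by rw [h5]; simp
          simp only [Finset.mem_insert, Finset.mem_singleton] at this
          rcases this with h6 | h6
          · exact hl h6.symm
          · exact hk.2 h6.symm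
    · simp
  refine ⟨- a {cidx n i}, ?_⟩
  rw [hform, Finset.sum_eq_single i]
  · module
  · intro l _ hl; rw [hj l hl, zero_smul]
  · simp

lemma sbL_pd_pd (k i : Fin n) : sbL n (pd n k) (pd n i) = 0 := by
  rw [pd_eq_DH n i, map_neg, sbL_pd_DH]
  rcases pd_mono_cases n k {cidx n i} with h | ⟨hk, c, h⟩
  · rw [h]; simp
  · rw [h]
    have : ({cidx n i} : Finset (Fin n)).erase k = ∅ := by
      rw [Finset.mem_singleton] at hk; rw [hk]; simp
    rw [this, map_smul, DH_mono_empty]; simp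

lemma pd_ne_zero (i : Fin n) : pd n i ≠ 0 := by
  intro h
  have h1 := congrFun (LinearMap.congr_fun h (mono n {i})) ∅
  rw [pd_empty, mono_self] at h1
  simp at h1

/-- the basic exchange identity -/
lemma exchange (hn : 4 < n) {i : Fin n} {q : ZMod 2} {D : E n →ₗ[ℂ] E n}
    (hD : IsSuperDer n (Hn n) q D) (h0 : ∀ z ∈ Hn n, sbL n (pd n i) (D z) = 0)
    {α β : ZMod 2} {y z : E n} (hy : y ∈ Hn n ⊓ epar n α) (hz : z ∈ Hn n ⊓ epar n β) :
    ∃ c : ℂ, c ≠ 0 ∧ sbL n (D y) (sbL n (pd n i) z) = c • sbL n (sbL n (pd n i) y) (D z) := by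
  have h1 := h0 _ (Hn_closed n hy.1 hz.1)
  have hDy := hD.maps _ _ hy
  have hDz := hD.maps _ _ hz
  rw [hD.leib _ _ _ hy _ hz, map_add, map_smul, jacobi2 n (pd_epar n i) hDy.2 hz.2,
    jacobi2 n (pd_epar n i) hy.2 hDz.2, h0 _ hy.1, h0 _ hz.1] at h1
  simp only [map_zero, smul_zero, add_zero, LinearMap.zero_apply, zero_add] at h1
  refine ⟨- (sgn (1 * (α + q)))⁻¹ * sgn (q * α), ?_, ?_⟩
  · simp [sgn_ne]
  · have h2 : sbL n (D y) (sbL n (pd n i) z) = (sgn (1 * (α + q)))⁻¹ •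
        (sgn (1 * (α + q)) • sbL n (D y) (sbL n (pd n i) z)) := by
      rw [smul_smul, inv_mul_cancel₀ (sgn_ne _), one_smul]
    rw [h2, eq_neg_of_add_eq_zero_left h1]
    module

lemma wt_single {i : Fin n} {S : Finset (Fin n)} (h1 : i ∈ S)
    (h2 : cidx n i ∉ S) : wt n i S = -1 := by simp [wt, h1, h2]

lemma wt_both {i : Fin n} {S : Finset (Fin n)} (h1 : i ∈ S)
    (h2 : cidx n i ∈ S) : wt n i S = 0 := by simp [wt, h1, h2]

lemma wt_neg_one {i : Fin n} {S : Finset (Fin n)} (h : wt n i S = -1) : i ∈ S := by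
  unfold wt at h
  by_contra hc
  rw [if_neg hc] at h
  split_ifs at h <;> norm_num at h

lemma wt_zero {i : Fin n} {S : Finset (Fin n)} (h : wt n i S = 0) (hs : i ∉ S) : cidx n i ∉ S := by
  unfold wt at h
  intro hc
  rw [if_pos hc, if_neg hs] at h
  norm_num at h

/-- Lemma B in normalized form -/
lemma der_norm (hn : 4 < n) {i : Fin n} (hi : cidx n i ≠ i) {q : ZMod 2} {D : E n →ₗ[ℂ] E n}
    (hD : IsSuperDer n (Hn n) q D) (h0 : ∀ z ∈ Hn n, sbL n (pd n i) (D z) = 0)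
    (hh : D (DHmap n (mono n {i, cidx n i})) = 0) : ∀ z ∈ Hn n, D z = 0 := by
  have hu2 : ∀ x y : Fin n, ({x, y} : Finset (Fin n)) ≠ Finset.univ := fun x y =>
    ne_univ_of_card n (lt_of_le_of_lt Finset.card_le_two (by omega))
  obtain ⟨e, he, hwt⟩ := wt_apply n hi
  -- structure of the images
  have key : ∀ S : Finset (Fin n), S ≠ Finset.univ → ∃ b : Lambda n,
      D (DHmap n (mono n S)) = DHmap n b ∧ (∀ T, T ≠ ∅ → b T ≠ 0 → wt n i T = wt n i S) ∧
      (∀ T : Finset (Fin n), 2 ≤ T.card → i ∈ T → b T = 0) := by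
    intro S hS
    obtain ⟨b, _, hb⟩ := (mem_Hn n).1 (hD.maps _ _ (X_mem n hS)).1
    refine ⟨b, hb.symm, ?_, ?_⟩
    · have h1 := hD.leib _ _ _ (X_mem n (hu2 i (cidx n i))) _ (X_mem n hS)
      have hc2 : (({i, cidx n i} : Finset (Fin n)).card : ZMod 2) = 0 := by
        rw [Finset.card_pair hi.symm]; rfl
      have hm : DHmap n (mono n {i, cidx n i}) (mono n S) = (e * wt n i S) • mono n S := by
        funext T
        rw [hwt, Pi.smul_apply, smul_eq_mul]
        by_cases hTS : T = S
        · rw [hTS]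
        · rw [mono_ne n hTS]; simp
      rw [hh, map_zero, LinearMap.zero_apply, zero_add, hc2, mul_zero, sgn_zero, one_smul,
        DH_bracket, hm, map_smul, map_smul, ← hb, DH_bracket, ← map_smul, ← sub_eq_zero,
        ← map_sub, DH_zero_iff] at h1
      intro T hT hbT
      have h2 := h1 T hT
      rw [Pi.sub_apply, Pi.smul_apply, hwt, smul_eq_mul] at h2
      have h3 : e * b T * (wt n i S - wt n i T) = 0 := by linear_combination h2
      have h4 := (mul_eq_zero.1 h3).resolve_left (mul_ne_zero he hbT)
      exact (sub_eq_zero.1 h4).symm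
    · intro T hT hiT
      have h1 := h0 _ (mono_mem_Hn n hS)
      rw [← hb, sbL_pd_DH] at h1
      exact pd_eq_zero_coef n h1 hiT hT
  -- the elements with `i`, without the conjugate
  have key1 : ∀ S : Finset (Fin n), S ≠ Finset.univ → i ∈ S → cidx n i ∉ S →
      ∃ c : ℂ, D (DHmap n (mono n S)) = c • DHmap n (mono n {i}) := by
    intro S hS h1 h2
    obtain ⟨b, hb, hbw, hbi⟩ := key S hS
    refine ⟨b {i}, ?_⟩
    rw [hb, ← map_smul, ← sub_eq_zero, ← map_sub, DH_zero_iff]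
    intro T hT
    rw [Pi.sub_apply, Pi.smul_apply, smul_eq_mul]
    by_cases hTi : T = {i}
    · rw [hTi, mono_self]; ring
    · rw [mono_ne n hTi, mul_zero, sub_zero]
      by_contra hbT
      have h3 := hbw T hT hbT
      rw [wt_single n h1 h2] at h3
      have h4 := wt_neg_one n h3
      refine hbT (hbi T ?_ h4)
      by_contra h5
      have h6 := Finset.card_pos.2 (Finset.nonempty_iff_ne_empty.2 hT)
      obtain ⟨j, rfl⟩ := Finset.card_eq_one.1 (by omega : T.card = 1)
      rw [Finset.mem_singleton] at h4
      exact hTi (by rw [h4])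
  -- exchange with `X_{i,k}`
  have key2 : ∀ k, k ≠ i → k ≠ cidx n i → ∃ c : ℂ, ∀ U : Finset (Fin n), U ≠ Finset.univ →
      ∀ b, D (DHmap n (mono n U)) = DHmap n b → ∃ d : ℂ, d ≠ 0 ∧
        c • DHmap n (pd n (cidx n i) (pd n i (mono n U))) = d • DHmap n (pd n (cidx n k) b) := by
    intro k hk hk'
    have hik : i ∉ ({k} : Finset (Fin n)) := by simpa using hk.symm
    obtain ⟨c, hc⟩ := key1 {i, k} (hu2 i k) (by simp) (by
      simp only [Finset.mem_insert, Finset.mem_singleton, not_or]; exact ⟨hi, hk'.symm⟩)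
    refine ⟨c, ?_⟩
    intro U hU b hb
    obtain ⟨d, hd, hex⟩ := exchange n hn hD h0 (X_mem n (hu2 i k)) (X_mem n hU)
    rw [hc, sbL_pd_DH, sbL_pd_DH, hb, pd_mono_insert n hik, map_smul, map_smul, DH_mono_one,
      DH_mono_one] at hex
    simp only [map_neg, LinearMap.neg_apply, LinearMap.smul_apply, sbL_pd_DH, map_smul] at hex
    refine ⟨d * msign (({k} : Finset (Fin n)).filter (· < i)).card,
      mul_ne_zero hd (msign_ne _), ?_⟩
    rw [mul_smul]
    simpa only [smul_neg, neg_inj] using hex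
  have key3 : ∀ k, k ≠ i → k ≠ cidx n i → ∀ U : Finset (Fin n), U ≠ Finset.univ →
      ∀ b, D (DHmap n (mono n U)) = DHmap n b → DHmap n (pd n (cidx n k) b) = 0 := by
    intro k hk hk'
    obtain ⟨c, hc⟩ := key2 k hk hk'
    have hki : cidx n k ≠ i := by rintro rfl; exact hk' (cidx_cidx n k).symm
    have hki' : cidx n k ≠ cidx n i := fun h => hk (cidx_inj n h)
    have hc0 : c = 0 := by
      have hU : ({i, cidx n i, cidx n k} : Finset (Fin n)) ≠ Finset.univ :=
        ne_univ_of_card n (lt_of_le_of_lt Finset.card_le_three (by omega))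
      obtain ⟨b, hb, _, _⟩ := key _ hU
      obtain ⟨d, hd, h1⟩ := hc _ hU b hb
      rw [← (DHmap n).map_smul c, ← (DHmap n).map_smul d, ← sub_eq_zero, ← map_sub,
        DH_zero_iff] at h1
      have h2 := h1 {cidx n k} (by simp)
      rw [Pi.sub_apply, Pi.smul_apply, Pi.smul_apply, pd_apply, pd_apply, pd_apply,
        if_pos (by simp : cidx n k ∈ ({cidx n k} : Finset (Fin n))),
        if_neg (by simpa using hki'.symm), if_neg, mono_self] at h2
      · simpa [msign_ne] using h2
      · simp only [Finset.mem_insert, Finset.mem_singleton, not_or]; exact ⟨hi.symm, hki.symm⟩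
    intro U hU b hb
    obtain ⟨d, hd, h1⟩ := hc U hU b hb
    rw [hc0, zero_smul] at h1
    exact (smul_eq_zero.1 h1.symm).resolve_left hd
  apply der_to_V n hn hD
  intro S hS
  by_cases hiS : i ∈ S
  · by_cases hiS' : cidx n i ∈ S
    · obtain ⟨b, hb, hbw, hbi⟩ := key S hS
      rw [hb]
      apply lin_V
      intro T hT
      by_contra hbT
      have hTi : i ∉ T := fun h => hbT (hbi T hT h)
      have hTe : T ≠ ∅ := by rintro rfl; simp at hT
      have hw := hbw T hTe hbT
      rw [wt_both n hiS hiS'] at hw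
      have hTi' := wt_zero n hw hTi
      obtain ⟨l, hl⟩ := Finset.nonempty_iff_ne_empty.2 hTe
      have h1 := key3 (cidx n l) (by rintro rfl; rw [cidx_cidx] at hTi'; exact hTi' hl)
        (fun h => hTi (by rw [← cidx_inj n h]; exact hl)) S hS b hb
      rw [cidx_cidx] at h1
      exact hbT (pd_eq_zero_coef n h1 hl hT)
    · obtain ⟨c, hc⟩ := key1 S hS hiS hiS'
      intro k
      rw [hc, map_smul, DH_mono_one, map_neg, sbL_pd_pd]; simp
  · obtain ⟨b, hb, _, _⟩ := key S hS
    obtain ⟨c, hc⟩ := ad_centralizer n hn i (a := b) (by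
      intro T hT
      obtain ⟨d, hd, hex⟩ := exchange n hn hD h0 (X_mem n hS) (X_mem n hT)
      rw [sbL_pd_DH n i (mono n S), pd_mono_notMem n hiS, map_zero, map_zero, LinearMap.zero_apply,
        smul_zero, hb, sbL_pd_DH, DH_bracket] at hex
      exact hex)
    intro k
    rw [hb, hc, map_smul, sbL_pd_pd, smul_zero]

lemma ad_der {x : E n} {q : ZMod 2} (hx : x ∈ Hn n ⊓ epar n q) :
    IsSuperDer n (Hn n) q (sbL n x) where
  maps α y hy := ⟨Hn_closed n hx.1 hy.1, by rw [add_comm]; exact sbL_epar n hx.2 hy.2⟩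
  leib α β y hy z hz := jacobi2 n hx.2 hy.2 hz.2

lemma der_sub {q : ZMod 2} {D F : E n →ₗ[ℂ] E n} (hD : IsSuperDer n (Hn n) q D)
    (hF : IsSuperDer n (Hn n) q F) (c : ℂ) : IsSuperDer n (Hn n) q (D - c • F) where
  maps α y hy := Submodule.sub_mem _ (hD.maps α y hy) (Submodule.smul_mem _ _ (hF.maps α y hy))
  leib α β y hy z hz := by
    simp only [LinearMap.sub_apply, LinearMap.smul_apply, map_sub, map_smul,
      hD.leib α β y hy z hz, hF.leib α β y hy z hz]
    module

lemma der_inner (hn : 4 < n) {i : Fin n} (hi : cidx n i ≠ i) {q : ZMod 2} {D : E n →ₗ[ℂ] E n}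
    (hD : IsSuperDer n (Hn n) q D) (h0 : ∀ z ∈ Hn n, sbL n (pd n i) (D z) = 0) :
    ∃ c : ℂ, (q = 1 ∨ c = 0) ∧ ∀ z ∈ Hn n, D z = c • sbL n (pd n i) z := by
  have hu : ({i, cidx n i} : Finset (Fin n)) ≠ Finset.univ :=
    ne_univ_of_card n (lt_of_le_of_lt Finset.card_le_two (by omega))
  obtain ⟨e, he, hie⟩ : ∃ e : ℂ, e ≠ 0 ∧
      sbL n (pd n i) (DHmap n (mono n {i, cidx n i})) = e • pd n i := by
    rw [sbL_pd_DH, pd_mono_insert n (by simpa using hi.symm), map_smul, DH_mono_one, cidx_cidx]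
    refine ⟨- msign (({cidx n i} : Finset (Fin n)).filter (· < i)).card,
      neg_ne_zero.2 (msign_ne _), by module⟩
  have hDh := hD.maps _ _ (X_mem n hu)
  obtain ⟨b, _, hb⟩ := (mem_Hn n).1 hDh.1
  obtain ⟨c, hc⟩ := ad_centralizer n hn i (a := b) (by
    intro T hT
    obtain ⟨d, hd, hex⟩ := exchange n hn hD h0 (X_mem n hu) (X_mem n hT)
    rw [hie, map_smul, LinearMap.smul_apply, h0 _ (mono_mem_Hn n hT), smul_zero, smul_zero, ← hb,
      sbL_pd_DH, DH_bracket] at hex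
    exact hex)
  rw [hb] at hc
  have hc2 : (({i, cidx n i} : Finset (Fin n)).card : ZMod 2) = 0 := by
    rw [Finset.card_pair hi.symm]; rfl
  rcases zmod2_cases q with rfl | rfl
  · refine ⟨0, Or.inr rfl, ?_⟩
    have hz : D (DHmap n (mono n {i, cidx n i})) = 0 := by
      have h1 := hDh.2
      rw [hc2, add_zero] at h1
      have h2 := epar_conj n h1
      have h3 := epar_conj n (Submodule.smul_mem _ c (pd_epar n i))
      rw [hc, h3, sgn_zero, sgn_one] at h2
      rw [hc]
      have h4 : (2 : ℂ) • (c • pd n i) = 0 := by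
        have : (2 : ℂ) • (c • pd n i) = (1 : ℂ) • (c • pd n i) - (-1 : ℂ) • (c • pd n i) := by module
        rw [this, h2, sub_self]
      exact (smul_eq_zero.1 h4).resolve_left (by norm_num)
    intro z hz'
    rw [der_norm n hn hi hD h0 hz z hz', zero_smul]
  · refine ⟨c / e, Or.inl rfl, ?_⟩
    have hD' := der_sub n hD (ad_der n (pd_mem n hn i)) (c / e)
    have h1 := der_norm n hn hi hD' (by
      intro z hz
      obtain ⟨a, _, rfl⟩ := (mem_Hn n).1 hz
      rw [LinearMap.sub_apply, map_sub, h0 _ hz, LinearMap.smul_apply, map_smul, sbL_pd_DH,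
        sbL_pd_DH]
      have : pd n i (pd n i a) = 0 := self_eq_neg.1 (pd_pd n i i a)
      rw [this]; simp) (by
      rw [LinearMap.sub_apply, LinearMap.smul_apply, hie, hc, smul_smul, div_mul_cancel₀ _ he,
        sub_self])
    intro z hz
    exact sub_eq_zero.1 (h1 z hz)

section

set_option synthInstance.maxHeartbeats 400000
set_option maxHeartbeats 1000000
set_option maxSynthPendingDepth 6

lemma bider_der {pf α : ZMod 2} {f : E n →ₗ[ℂ] E n →ₗ[ℂ] E n} (hf : IsSuperBider n (Hn n) pf f)
    {x : E n} (hx : x ∈ Hn n ⊓ epar n α) : IsSuperDer n (Hn n) (pf + α) (f x) where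
  maps β y hy := by
    have := hf.maps α β x hx y hy
    rwa [show α + β + pf = β + (pf + α) by ring] at this
  leib β γ y hy z hz := hf.eq2 α β γ x hx y hy z hz

lemma bider_sbL : IsSuperBider n (Hn n) 0 (sbL n) where
  maps α β x hx y hy := ⟨Hn_closed n hx.1 hy.1, by rw [add_zero]; exact sbL_epar n hx.2 hy.2⟩
  eq1 α β γ x hx y hy z hz := by
    rw [mul_zero, sgn_zero, one_smul]; exact jacobi1 n hx.2 hy.2 hz.2
  eq2 α β γ x hx y hy z hz := by
    rw [zero_add]; exact jacobi2 n hx.2 hy.2 hz.2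

lemma bider_sub {pf : ZMod 2} {f g : E n →ₗ[ℂ] E n →ₗ[ℂ] E n} (hf : IsSuperBider n (Hn n) pf f)
    (hg : IsSuperBider n (Hn n) pf g) (c : ℂ) : IsSuperBider n (Hn n) pf (f - c • g) where
  maps α β x hx y hy := Submodule.sub_mem _ (hf.maps α β x hx y hy)
    (Submodule.smul_mem _ _ (hg.maps α β x hx y hy))
  eq1 α β γ x hx y hy z hz := by
    simp only [LinearMap.sub_apply, LinearMap.smul_apply, map_sub, map_smul,
      hf.eq1 α β γ x hx y hy z hz, hg.eq1 α β γ x hx y hy z hz]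
    module
  eq2 α β γ x hx y hy z hz := by
    simp only [LinearMap.sub_apply, LinearMap.smul_apply, map_sub, map_smul,
      hf.eq2 α β γ x hx y hy z hz, hg.eq2 α β γ x hx y hy z hz]
    module

lemma bider_anti (hn : 4 < n) {pf : ZMod 2} {f : E n →ₗ[ℂ] E n →ₗ[ℂ] E n}
    (hf : IsSuperBider n (Hn n) pf f) (i j : Fin n) :
    ∀ z ∈ Hn n, sbL n (pd n j) (f (pd n i) z) = - sbL n (pd n i) (f (pd n j) z) := by
  refine Hn_ind n _ (by simp) (fun x y hx hy => by simp only [map_add, hx, hy]; abel)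
    (fun c x hx => by simp only [map_smul, hx, smul_neg]) ?_
  intro S _ hS
  have h1 := hf.eq1 _ _ _ _ (pd_mem n hn j) _ (pd_mem n hn i) _ (X_mem n hS)
  have hm := hf.maps _ _ _ (pd_mem n hn j) _ (X_mem n hS)
  rw [sbL_pd_pd, map_zero, LinearMap.zero_apply, sbL_skew n hm.2 (pd_epar n i)] at h1
  generalize (S.card : ZMod 2) = γ at h1
  have h2 : sgn pf • (sbL n (pd n j) (f (pd n i) (DHmap n (mono n S))) +
      sbL n (pd n i) (f (pd n j) (DHmap n (mono n S)))) = 0 := by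
    rw [h1]
    rcases zmod2_cases pf with rfl | rfl <;> rcases zmod2_cases γ with rfl | rfl <;>
      simp only [mul_one, one_mul, mul_zero, add_zero, zero_add, sgn_zero, sgn_one,
        zmod2_add_self] <;> module
  exact eq_neg_of_add_eq_zero_left ((smul_eq_zero.1 h2).resolve_left (sgn_ne _))

lemma bider_self (hn : 4 < n) {pf : ZMod 2} {f : E n →ₗ[ℂ] E n →ₗ[ℂ] E n}
    (hf : IsSuperBider n (Hn n) pf f) (i : Fin n) :
    ∀ z ∈ Hn n, sbL n (pd n i) (f (pd n i) z) = 0 := by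
  intro z hz
  have h1 := bider_anti n hn hf i i z hz
  have h2 : (2 : ℂ) • sbL n (pd n i) (f (pd n i) z) = 0 := by
    rw [two_smul]
    nth_rewrite 1 [h1]
    exact neg_add_cancel _
  exact (smul_eq_zero.1 h2).resolve_left (by norm_num)

/-- A super-biderivation that vanishes on all `∂_k` (first argument) is zero. -/
lemma bider_zero (hn : 4 < n) {pf : ZMod 2} {g : E n →ₗ[ℂ] E n →ₗ[ℂ] E n}
    (hg : IsSuperBider n (Hn n) pf g) (h : ∀ k, ∀ z ∈ Hn n, g (pd n k) z = 0) :
    ∀ x ∈ Hn n, ∀ z ∈ Hn n, g x z = 0 := by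
  have key : ∀ m : ℕ, ∀ S : Finset (Fin n), S.card = m → S ≠ Finset.univ →
      ∀ z ∈ Hn n, g (DHmap n (mono n S)) z = 0 := by
    intro m
    induction m with
    | zero =>
      intro S hS _ z _
      rw [Finset.card_eq_zero] at hS
      rw [hS, DH_mono_empty]; simp
    | succ m ih =>
      intro S hS hSu
      apply der_to_V n hn (bider_der n hg (X_mem n hSu))
      intro T hT k
      have h1 := hg.eq1 _ _ _ _ (pd_mem n hn k) _ (X_mem n hSu) _ (X_mem n hT)
      rw [h k _ (mono_mem_Hn n hT), map_zero, LinearMap.zero_apply, smul_zero, add_zero,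
        sbL_pd_DH] at h1
      have h2 : g (DHmap n (pd n k (mono n S))) (DHmap n (mono n T)) = 0 := by
        rcases pd_mono_cases n k S with h | ⟨hk, c, h⟩
        · rw [h]; simp
        · have hcard : (S.erase k).card = m := by rw [Finset.card_erase_of_mem hk]; omega
          rw [h, map_smul, map_smul, LinearMap.smul_apply, ih _ hcard, smul_zero]
          · intro hu
            have := Finset.notMem_erase k S
            rw [hu] at this
            exact this (Finset.mem_univ k)
          · exact mono_mem_Hn n hT
      rw [h2] at h1
      exact (smul_eq_zero.1 h1.symm).resolve_left (sgn_ne _)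
  refine Hn_ind n _ (fun z _ => by simp)
    (fun x y hx hy z hz => by rw [map_add, LinearMap.add_apply, hx z hz, hy z hz, add_zero])
    (fun c x hx z hz => by rw [map_smul, LinearMap.smul_apply, hx z hz, smul_zero]) ?_
  intro S _ hS z hz
  exact key _ S rfl hS z hz

lemma cidx_fixed {i : Fin n} (h : cidx n i = i) : n ≤ i.val + 1 := by
  have := congrArg Fin.val h
  simp only [cidx] at this
  have := i.isLt
  split_ifs at * <;> omega

lemma bider_main (hn : 4 < n) {pf : ZMod 2} {f : E n →ₗ[ℂ] E n →ₗ[ℂ] E n}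
    (hf : IsSuperBider n (Hn n) pf f) :
    ∃ lam : ℂ, ∀ x ∈ Hn n, ∀ y ∈ Hn n, f x y = lam • sbL n x y := by
  have hloc : ∀ i, cidx n i ≠ i → ∃ c : ℂ, (pf + 1 = 1 ∨ c = 0) ∧
      ∀ z ∈ Hn n, f (pd n i) z = c • sbL n (pd n i) z := fun i hi =>
    der_inner n hn hi (bider_der n hf (pd_mem n hn i)) (bider_self n hn hf i)
  let o : Fin n := ⟨0, by omega⟩
  have ho : cidx n o ≠ o := by
    intro h
    have := cidx_fixed n h
    have : o.val = 0 := rfl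
    omega
  obtain ⟨lam, hlam, hlo⟩ := hloc o ho
  refine ⟨lam, ?_⟩
  have hg : IsSuperBider n (Hn n) pf (f - lam • sbL n) := by
    rcases hlam with h | h
    · have hp : pf = 0 := by simpa using h
      subst hp
      exact bider_sub n hf (bider_sbL n) lam
    · rw [h, zero_smul, sub_zero]; exact hf
  have h1 : ∀ i, cidx n i ≠ i → ∀ z ∈ Hn n, (f - lam • sbL n) (pd n i) z = 0 := by
    intro i hi z hz
    rw [LinearMap.sub_apply, LinearMap.sub_apply, LinearMap.smul_apply, LinearMap.smul_apply]
    by_cases hio : i = o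
    · rw [hio, hlo z hz, sub_self]
    obtain ⟨c, _, hc⟩ := hloc i hi
    obtain ⟨k, hk⟩ := exists_avoid n hn {i, o} (Finset.card_le_two.trans (by norm_num))
    simp only [Finset.mem_singleton, Finset.mem_insert, not_or] at hk
    have hU : ({i, o, k} : Finset (Fin n)) ≠ Finset.univ :=
      ne_univ_of_card n (lt_of_le_of_lt Finset.card_le_three (by omega))
    have h2 := bider_anti n hn hf i o _ (mono_mem_Hn n hU)
    rw [hc _ (mono_mem_Hn n hU), hlo _ (mono_mem_Hn n hU), map_smul, map_smul, sbL_pd_DH,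
      sbL_pd_DH, sbL_pd_DH, sbL_pd_DH, pd_pd n i o, map_neg, smul_neg, neg_neg, ← sub_eq_zero,
      ← sub_smul] at h2
    have h3 : c - lam = 0 := by
      rcases smul_eq_zero.1 h2 with h | h
      · exact h
      · exfalso
        rw [DH_zero_iff] at h
        have h4 := h {k} (by simp)
        rw [pd_apply, pd_apply, if_neg (by simpa using Ne.symm hk.2), if_neg, mono_self] at h4
        · simp [msign_ne] at h4
        · simp only [Finset.mem_insert, Finset.mem_singleton, not_or]
          exact ⟨hio, Ne.symm hk.1⟩
    rw [hc z hz, ← sub_smul, h3, zero_smul]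
  have h2 : ∀ i, ∀ z ∈ Hn n, (f - lam • sbL n) (pd n i) z = 0 := by
    intro i
    by_cases hi : cidx n i = i
    · apply der_to_V n hn (bider_der n hg (pd_mem n hn i))
      intro S hS k
      by_cases hk : cidx n k = k
      · have e1 := cidx_fixed n hk
        have e2 := cidx_fixed n hi
        have : k = i := Fin.ext (by omega)
        rw [this]
        exact bider_self n hn hg i _ (mono_mem_Hn n hS)
      · rw [bider_anti n hn hg i k _ (mono_mem_Hn n hS), h1 k hk _ (mono_mem_Hn n hS)]
        simp
    · exact h1 i hi
  intro x hx y hy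
  exact sub_eq_zero.1 (bider_zero n hn hg h2 x hx y hy)

end

/-- Every (homogeneous) super-biderivation of the Hamiltonian Lie
superalgebra `H(n)`, `n > 4`, over `ℂ` is an inner super-biderivation:
`BDer(H(n)) = IBDer(H(n))`. -/
theorem superBider_inner_H (n : ℕ) (hn : 4 < n)
    (pf : ZMod 2) (f : E n →ₗ[ℂ] E n →ₗ[ℂ] E n)
    (hf : IsSuperBider n (CT.H.algebra n) pf f) :
    ∃ lam : ℂ, ∀ x ∈ CT.H.algebra n, ∀ y ∈ CT.H.algebra n, f x y = lam • sbL n x y := by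
  exact bider_main n hn hf

end CartanSuper
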